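/- Fix an integer d ≥ 2. There exist constants C > 0 and c > 0, depending only on d, such that for every prime p and every nontrivial irreducible unitary representation π of SL₂(ℤ/pℤ), the proportion of tuples S = (g₁, …, g_d) ∈ (SL₂(ℤ/pℤ))^d (with respect to the uniform measure on the d-fold product) satisfying D(μ_{π,S}, f_{2d}) ≤ C / log p is at least 1 − c·p^{−1/4}. -/

import Mathlib

open MeasureTheory

noncomputable section

abbrev SL (n p : ℕ) := Matrix.SpecialLinearGroup (Fin n) (ZMod p)

/-- Density of the Kesten–McKay law with parameter `2d`. -/
noncomputable def kmDensity (d : ℕ) (x : ℝ) : ℝ :=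
  if x ^ 2 ≤ 4 * (2 * (d : ℝ) - 1) then
    2 * d * Real.sqrt (4 * (2 * (d : ℝ) - 1) - x ^ 2) /
      (2 * Real.pi * ((2 * (d : ℝ)) ^ 2 - x ^ 2))
  else 0

/-- The Kesten–McKay law with parameter `2d`, as a measure on `ℝ`. -/
noncomputable def kestenMcKay (d : ℕ) : Measure ℝ :=
  MeasureTheory.volume.withDensity fun x => ENNReal.ofReal (kmDensity d x)

/-- Discrepancy between two measures on ℝ. -/
noncomputable def discrepancy (ν μ : Measure ℝ) : ℝ :=
  sSup {r : ℝ | ∃ a b : ℝ, a ≤ b ∧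
    r = |(ν (Set.Icc a b)).toReal - (μ (Set.Icc a b)).toReal|}

/-- The element of the free group on `d` generators given by a word of length `m`. -/
def wordProd {d m : ℕ} (w : Fin m → Fin d × Bool) : FreeGroup (Fin d) :=
  (List.ofFn fun j => if (w j).2 then FreeGroup.of (w j).1 else (FreeGroup.of (w j).1)⁻¹).prod

/-- Evaluation of a word of length `m` in `d` letters at a tuple `S`. -/
def wordEval {G : Type*} [Group G] {d m : ℕ} (S : Fin d → G) (w : Fin m → Fin d × Bool) : G :=
  (List.ofFn fun j => if (w j).2 then S (w j).1 else (S (w j).1)⁻¹).prod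

/-- `N(d,m)`: the number of trivial words of length `m` in `d` letters. -/
noncomputable def Ntriv (d m : ℕ) : ℕ :=
  Nat.card {w : Fin m → Fin d × Bool // wordProd w = 1}

/-- `A_{π,S} = Σᵢ (π gᵢ + (π gᵢ)⁻¹)`. -/
noncomputable def Amat {G : Type*} [Group G] {n d : ℕ}
    (π : G →* Matrix.unitaryGroup (Fin n) ℂ) (S : Fin d → G) : Matrix (Fin n) (Fin n) ℂ :=
  ∑ i, ((π (S i) : Matrix (Fin n) (Fin n) ℂ) + ((π (S i))⁻¹ : Matrix (Fin n) (Fin n) ℂ))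

/-- Spectral probability measure of a Hermitian matrix. -/
noncomputable def specMeasure {n : ℕ} (A : Matrix (Fin n) (Fin n) ℂ) : Measure ℝ := by
  classical
  exact if hA : A.IsHermitian then
    (n : ENNReal)⁻¹ • ∑ j : Fin n, Measure.dirac (hA.eigenvalues j) else 0

/-- A unitary representation is irreducible if the only invariant subspaces are `⊥` and `⊤`. -/
def IsIrreducibleRep {G : Type*} [Group G] {n : ℕ}
    (π : G →* Matrix.unitaryGroup (Fin n) ℂ) : Prop :=
  ∀ W : Submodule ℂ (Fin n → ℂ),
    (∀ g : G, ∀ v ∈ W, (π g : Matrix (Fin n) (Fin n) ℂ).mulVec v ∈ W) → W = ⊥ ∨ W = ⊤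

/-- Number of eigenvalues of a Hermitian matrix with `|λ| > t`, with multiplicity. -/
noncomputable def excCount {n : ℕ} (A : Matrix (Fin n) (Fin n) ℂ) (t : ℝ) : ℕ := by
  classical
  exact if hA : A.IsHermitian then
    (Finset.univ.filter fun j : Fin n => t < |hA.eigenvalues j|).card else 0

end

/-!
For noncentral `g` in `SL₂(𝔽_p)` column orthogonality bounds `|χ_π(g)|²` by the order `O(p)` of the
centralizer of `g`, while a nontrivial `π` has dimension at least `(p - 1) / 2`; hence
`|χ_π(g)| / dim π = O(p^{-1/2})`. To see that a nonempty reduced word `w` of length `m` is rarely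
central, write each `gᵢ` as `z u(t) z'⁻¹` with `u(t)` a transvection and `z`, `z'` random: the word
becomes a matrix polynomial of degree `m` in `t`, whose leading coefficient has rank one for all but
a proportion `m / p` of the choices of the `z`'s, and then it is scalar for at most `m` values of
`t`.

Summing over reduced words of length `m` evaluates the `m`-th Geronimus polynomial at `A_{π,S}`, and
these polynomials are orthogonal to `1` for the Kesten–McKay law. So on average over `S` the
Geronimus moments of `μ_{π,S}` and of `f_{2d}` differ by `O((2d)^m m p^{-1/2})`. Finally the
distribution functions are compared through a polynomial approximate identity, the square of a
Dirichlet kernel of order `k`: closeness of the first `4k + 1` moments up to `49^{-k}` bounds their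
sup-distance by `O(1 / k)` plus half of itself, hence by `O(1 / k)`. Take `k` of order `log p`.
-/

section Representations

variable {G : Type*} [Group G] {n : ℕ} {π : G →* Matrix.unitaryGroup (Fin n) ℂ}

/-- The linear representation on `ℂⁿ` underlying a homomorphism to the unitary group; it makes
Mathlib's character theory available. -/
def unitaryRepresentation (π : G →* Matrix.unitaryGroup (Fin n) ℂ) :
    Representation ℂ G (Fin n → ℂ) :=
  (Matrix.toLinAlgEquiv' : Matrix (Fin n) (Fin n) ℂ ≃ₐ[ℂ] _).toMonoidHom.comp
    ((Matrix.unitaryGroup (Fin n) ℂ).subtype.comp π)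

theorem character_unitaryRepresentation (g : G) :
    (unitaryRepresentation π).character g = (π g : Matrix (Fin n) (Fin n) ℂ).trace :=
  Matrix.trace_toLin'_eq _

theorem IsIrreducibleRep.isIrreducible [NeZero n] (hπ : IsIrreducibleRep π) :
    (unitaryRepresentation π).IsIrreducible where
  exists_pair_ne := by
    refine ⟨⊥, ⊤, fun h => ?_⟩
    exact bot_ne_top (α := Submodule ℂ (Fin n → ℂ)) (congrArg Subrepresentation.toSubmodule h)
  eq_bot_or_eq_top W :=
    (hπ W.toSubmodule fun g _ hv => W.apply_mem_toSubmodule g hv).imp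
      (fun h => Subrepresentation.toSubmodule_injective h)
      fun h => Subrepresentation.toSubmodule_injective h

theorem trace_map_inv_eq_star (g : G) :
    (π g⁻¹ : Matrix (Fin n) (Fin n) ℂ).trace = star (π g : Matrix (Fin n) (Fin n) ℂ).trace := by
  rw [map_inv, ← Matrix.trace_conjTranspose]
  rfl

theorem IsIrreducibleRep.sum_sq_norm_trace [Fintype G] [NeZero n] (hπ : IsIrreducibleRep π) :
    ∑ g, ‖(π g : Matrix (Fin n) (Fin n) ℂ).trace‖ ^ 2 = Nat.card G := by
  have := hπ.isIrreducible
  have hG : (Nat.card G : ℂ) ≠ 0 := Nat.cast_ne_zero.2 Nat.card_pos.ne'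
  have : Invertible (Nat.card G : ℂ) := invertibleOfNonzero hG
  have h := (unitaryRepresentation π).char_orthonormal (unitaryRepresentation π)
  rw [if_pos ⟨.refl _⟩, inv_mul_eq_one₀ hG] at h
  simp only [character_unitaryRepresentation, trace_map_inv_eq_star, RCLike.star_def,
    Complex.mul_conj'] at h
  exact_mod_cast h.symm

theorem trace_map_eq_of_isConj {g h : G} (hgh : IsConj g h) :
    (π g : Matrix (Fin n) (Fin n) ℂ).trace = (π h : Matrix (Fin n) (Fin n) ℂ).trace := by
  obtain ⟨c, rfl⟩ := isConj_iff.1 hgh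
  rw [← character_unitaryRepresentation, ← character_unitaryRepresentation,
    Representation.char_conj]

theorem IsIrreducibleRep.sq_norm_trace_le_card_centralizer [Finite G] [NeZero n]
    (hπ : IsIrreducibleRep π) (g : G) :
    ‖(π g : Matrix (Fin n) (Fin n) ℂ).trace‖ ^ 2 ≤ Nat.card (Subgroup.centralizer {g}) := by
  classical
  have := Fintype.ofFinite G
  set t := ‖(π g : Matrix (Fin n) (Fin n) ℂ).trace‖ ^ 2
  have orbit_stabilizer :
      Nat.card (MulAction.orbit (ConjAct G) g) * Nat.card (Subgroup.centralizer {g})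
        = Nat.card G := by
    rw [Subgroup.nat_card_centralizer_nat_card_stabilizer, ← Nat.card_prod,
      Nat.card_congr (MulAction.orbitProdStabilizerEquivGroup (ConjAct G) g)]
    rfl
  have class_sum : Nat.card (MulAction.orbit (ConjAct G) g) * t ≤ Nat.card G := by
    rw [← hπ.sum_sq_norm_trace, ConjAct.orbit_eq_carrier_conjClasses, Nat.card_eq_fintype_card,
      ← Set.toFinset_card, ← nsmul_eq_mul, ← Finset.sum_const]
    refine (Finset.sum_le_sum fun h hh => le_of_eq ?_).trans
      (Finset.sum_le_univ_sum_of_nonneg fun _ => sq_nonneg _)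
    rw [Set.mem_toFinset, ConjClasses.mem_carrier_iff_mk_eq, ConjClasses.mk_eq_mk_iff_isConj] at hh
    simp only [t, trace_map_eq_of_isConj hh]
  have : Nonempty (MulAction.orbit (ConjAct G) g) := ⟨⟨g, MulAction.mem_orbit_self g⟩⟩
  rw [← orbit_stabilizer, Nat.cast_mul] at class_sum
  exact le_of_mul_le_mul_left class_sum (Nat.cast_pos.2 Nat.card_pos)

theorem norm_trace_le_of_mem_unitaryGroup {U : Matrix (Fin n) (Fin n) ℂ}
    (hU : U ∈ Matrix.unitaryGroup (Fin n) ℂ) : ‖U.trace‖ ≤ n := by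
  refine (norm_sum_le _ _).trans ?_
  simpa using Finset.sum_le_card_nsmul Finset.univ (fun i => ‖U i i‖) 1
    fun i _ => entry_norm_bound_of_unitary hU i i

end Representations

section SpecialLinearGroup

open Matrix MatrixGroups

theorem exists_eq_smul_one_add_smul_of_commute {F V : Type*} [Field F] [AddCommGroup V]
    [Module F V] (hV : Module.finrank F V = 2) {f g : Module.End F V}
    (hg : ∀ a : F, g ≠ a • 1) (hfg : Commute f g) : ∃ x y : F, f = x • 1 + y • g := by
  obtain ⟨v, hv⟩ : ∃ v, LinearIndependent F ![v, g v] := by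
    by_contra! h
    obtain ⟨a, ha⟩ := LinearMap.exists_eq_smul_id_of_forall_notLinearIndependent h
    exact hg a ha
  have : FiniteDimensional F V := Module.finite_of_finrank_eq_succ hV
  set b := basisOfLinearIndependentOfCardEqFinrank hv (by simp [hV])
  have b_zero : b 0 = v := by simp [b]
  have b_one : b 1 = g v := by simp [b]
  refine ⟨b.repr (f v) 0, b.repr (f v) 1, ?_⟩
  have hfv : f v = b.repr (f v) 0 • v + b.repr (f v) 1 • g v := by
    conv_lhs => rw [← b.sum_repr (f v), Fin.sum_univ_two, b_zero, b_one]
  have hfgv : f (g v) = g (f v) := congr($hfg v)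
  refine b.ext fun i => ?_
  fin_cases i
  · simpa [b_zero] using hfv
  · simpa [b_one, hfgv] using congrArg g hfv

variable {F : Type*} [Field F]

theorem scalar_ne_of_notMem_center {g : SL(2, F)} (hg : g ∉ Subgroup.center SL(2, F)) (a : F) :
    (g : Matrix (Fin 2) (Fin 2) F) ≠ a • 1 := by
  intro h
  refine hg (Subgroup.mem_center_iff.2 fun k => Subtype.ext ?_)
  simp [h]

theorem det_smul_one_add_smul (g : SL(2, F)) (x y : F) :
    (x • 1 + y • (g : Matrix (Fin 2) (Fin 2) F)).det = x ^ 2 + x * y * g.1.trace + y ^ 2 := by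
  have hg := g.det_coe
  rw [det_fin_two] at hg
  simp only [det_fin_two, trace_fin_two, Matrix.add_apply, Matrix.smul_apply, one_apply_eq,
    smul_eq_mul, one_apply_ne zero_ne_one, one_apply_ne one_ne_zero]
  linear_combination y ^ 2 * hg

theorem card_filter_sq_add_mul_mul_add_sq_le [Fintype F] [DecidableEq F] (s c : F) :
    (Finset.univ.filter fun q : F × F => q.1 ^ 2 + q.1 * q.2 * s + q.2 ^ 2 = c).card ≤
      2 * Fintype.card F := by
  refine Finset.card_le_mul_card_image_of_maps_to (f := Prod.snd)
    (fun _ _ => Finset.mem_univ _) 2 fun y _ => ?_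
  rw [Finset.filter_filter]
  obtain h | ⟨⟨x, y'⟩, hxy⟩ := Finset.eq_empty_or_nonempty
    (Finset.univ.filter fun q : F × F => q.1 ^ 2 + q.1 * q.2 * s + q.2 ^ 2 = c ∧ q.2 = y)
  · simp only [h, Finset.card_empty, zero_le]
  obtain ⟨hx, rfl⟩ := (Finset.mem_filter.1 hxy).2
  refine (Finset.card_le_card (t := {(x, y'), (-x - y' * s, y')}) ?_).trans Finset.card_le_two
  intro ⟨x', y⟩ h
  obtain ⟨hx', rfl⟩ := (Finset.mem_filter.1 h).2
  have vieta : (x' - x) * (x' + x + y * s) = 0 := by linear_combination hx' - hx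
  rcases mul_eq_zero.1 vieta with h | h
  · simp [sub_eq_zero.1 h]
  · simp [show x' = -x - y * s by linear_combination h]

theorem card_centralizer_singleton_le [Finite F] {g : SL(2, F)}
    (hg : g ∉ Subgroup.center SL(2, F)) :
    Nat.card (Subgroup.centralizer {g}) ≤ 2 * Nat.card F := by
  classical
  have := Fintype.ofFinite F
  have param (h : Subgroup.centralizer {g}) :
      ∃ q : F × F, (h.1 : Matrix (Fin 2) (Fin 2) F) = q.1 • 1 + q.2 • g.1 := by
    have hcomm : Commute (toLinAlgEquiv' h.1.1) (toLinAlgEquiv' g.1) := by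
      have := Subgroup.mem_centralizer_singleton_iff.1 h.2
      exact Commute.map (congrArg Subtype.val this) (toLinAlgEquiv' (R := F) (n := Fin 2))
    obtain ⟨x, y, hxy⟩ := exists_eq_smul_one_add_smul_of_commute (by simp)
      (fun a ha => scalar_ne_of_notMem_center hg a
        (toLinAlgEquiv'.injective (by rw [ha, map_smul, map_one]))) hcomm
    exact ⟨(x, y), toLinAlgEquiv'.injective (by rw [hxy, map_add, map_smul, map_smul, map_one])⟩
  choose q hq using param
  have q_injective : Function.Injective q := fun h k hhk =>
    Subtype.ext (Subtype.ext (by rw [hq, hq, hhk]))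
  rw [Nat.card_eq_fintype_card, ← Finset.card_univ, Nat.card_eq_fintype_card]
  refine le_trans (Finset.card_le_card_of_injOn q (fun h _ => ?_) q_injective.injOn)
    (card_filter_sq_add_mul_mul_add_sq_le g.1.trace 1)
  simp [← det_smul_one_add_smul, ← hq]

theorem transvection_nsmul {ι R : Type*} [DecidableEq ι] [Fintype ι] [CommRing R] {i j : ι}
    (hij : i ≠ j) (b : R) (k : ℕ) :
    SpecialLinearGroup.transvection hij (k • b) = SpecialLinearGroup.transvection hij b ^ k := by
  induction k with
  | zero => simp
  | succ k ih => rw [succ_nsmul, SpecialLinearGroup.transvection_add, ih, pow_succ]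

theorem isConj_transvection_neg {R : Type*} [CommRing R] (b : R) :
    IsConj (SpecialLinearGroup.transvection zero_ne_one (-b) : SL(2, R))
      (SpecialLinearGroup.transvection one_ne_zero b) := by
  refine isConj_iff.2 ⟨(⟨!![0, -1; 1, 0], by simp⟩ : SL(2, R)), mul_inv_eq_of_eq_mul ?_⟩
  refine Subtype.ext ?_
  change !![0, -1; 1, 0] * (1 + single 0 1 (-b)) = (1 + single 1 0 b) * !![0, -1; 1, 0]
  ext i j
  fin_cases i <;> fin_cases j <;> simp [mul_apply, Fin.sum_univ_two]

theorem isConj_transvection_sq_mul {a : F} (ha : a ≠ 0) (b : F) :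
    IsConj (SpecialLinearGroup.transvection zero_ne_one b : SL(2, F))
      (SpecialLinearGroup.transvection zero_ne_one (a ^ 2 * b)) := by
  refine isConj_iff.2 ⟨SpecialLinearGroup.diag2 a ha, ?_⟩
  have h := commutator_diag2_transvection a ha b _ rfl
  rw [commutatorElement_def, mul_inv_eq_iff_eq_mul, ← SpecialLinearGroup.transvection_add] at h
  rw [h]
  congr 1
  ring

theorem map_eq_one_of_map_transvection_eq_one {p : ℕ} [Fact p.Prime] {H : Type*} [Group H]
    (π : SL(2, ZMod p) →* H) (hπ : π (SpecialLinearGroup.transvection zero_ne_one 1) = 1)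
    (g : SL(2, ZMod p)) : π g = 1 := by
  have upper (b : ZMod p) : π (SpecialLinearGroup.transvection zero_ne_one b) = 1 := by
    rw [← ZMod.natCast_zmod_val b, ← nsmul_one, transvection_nsmul, map_pow, hπ, one_pow]
  have lower (b : ZMod p) : π (SpecialLinearGroup.transvection one_ne_zero b) = 1 := by
    have := π.map_isConj (isConj_transvection_neg b)
    rwa [upper, isConj_one_right] at this
  refine SL2.transvection_induction (fun g => π g = 1) (fun i j hij b => ?_)
    (fun A B hA hB => by rw [map_mul, hA, hB, mul_one]) g
  fin_cases i <;> fin_cases j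
  · exact absurd rfl hij
  · exact upper b
  · exact lower b
  · exact absurd rfl hij

end SpecialLinearGroup

section DimensionBound

open Matrix MatrixGroups

variable {n : ℕ}

theorem card_le_of_subset_spectrum {K ι : Type*} [Field K] [Fintype ι] [DecidableEq ι]
    {A : Matrix ι ι K} {s : Finset K} (hs : ↑s ⊆ spectrum K A) : s.card ≤ Fintype.card ι := by
  rw [← A.charpoly_natDegree_eq_dim]
  refine Polynomial.card_le_degree_of_subset_roots fun z hz => ?_
  rw [Polynomial.mem_roots A.charpoly_monic.ne_zero]
  exact mem_spectrum_iff_isRoot_charpoly.1 (hs hz)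

theorem spectrum_map_eq_of_isConj {G : Type*} [Group G] (π : G →* unitaryGroup (Fin n) ℂ)
    {g h : G} (hgh : IsConj g h) :
    spectrum ℂ (π g : Matrix (Fin n) (Fin n) ℂ) = spectrum ℂ (π h : Matrix (Fin n) (Fin n) ℂ) := by
  obtain ⟨c, rfl⟩ := isConj_iff.1 hgh
  rw [map_mul, map_mul, map_inv]
  exact (spectrum.units_conjugate (u := Unitary.toUnits (π c))).symm

open scoped Matrix.Norms.L2Operator in
theorem exists_mem_spectrum_orderOf_eq_prime {p : ℕ} [Fact p.Prime] {U : unitaryGroup (Fin n) ℂ}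
    (hU : U ≠ 1) (hUp : U ^ p = 1) :
    ∃ z ∈ spectrum ℂ (U : Matrix (Fin n) (Fin n) ℂ), orderOf z = p := by
  obtain ⟨z, hz, hz_ne⟩ : ∃ z ∈ spectrum ℂ (U : Matrix (Fin n) (Fin n) ℂ), z ≠ 1 := by
    by_contra! h
    exact hU (Subtype.ext (CFC.eq_one_of_spectrum_subset_one (R := ℂ) _ h
      (isStarNormal_of_mem_unitary U.2)))
  refine ⟨z, hz, orderOf_eq_prime ?_ hz_ne⟩
  have : Nontrivial (Matrix (Fin n) (Fin n) ℂ) := by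
    by_contra h
    have := not_nontrivial_iff_subsingleton.1 h
    exact hU (Subsingleton.elim _ _)
  have hzp := spectrum.pow_mem_pow (U : Matrix (Fin n) (Fin n) ℂ) p hz
  have hUp' : (U : Matrix (Fin n) (Fin n) ℂ) ^ p = 1 := congrArg Subtype.val hUp
  rwa [hUp', spectrum.one_eq] at hzp

theorem le_two_mul_card_image_pow_sq {M : Type*} [Monoid M] [DecidableEq M]
    {p : ℕ} [Fact p.Prime] {z : M} (hz : orderOf z = p) :
    p - 1 ≤ 2 * (Finset.univ.image fun a : (ZMod p)ˣ => z ^ ((a : ZMod p) ^ 2).val).card := by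
  rw [← Nat.totient_prime Fact.out, ← ZMod.card_units_eq_totient, ← Finset.card_univ]
  refine Finset.card_le_mul_card_image _ 2 fun b hb => ?_
  obtain ⟨a, -, rfl⟩ := Finset.mem_image.1 hb
  refine (Finset.card_le_card (t := {a, -a}) fun a' ha' => ?_).trans Finset.card_le_two
  have hval := pow_injOn_Iio_orderOf (by rw [hz]; exact ZMod.val_lt _)
    (by rw [hz]; exact ZMod.val_lt _) (Finset.mem_filter.1 ha').2
  have hsq : a' ^ 2 = a ^ 2 := Units.ext (by simpa using ZMod.val_injective p hval)
  simpa using Units.eq_or_eq_neg_of_sq_eq_sq _ _ hsq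

variable {p : ℕ} [Fact p.Prime] {π : SL(2, ZMod p) →* unitaryGroup (Fin n) ℂ}

/- The unipotent element `u = [1 1; 0 1]` is conjugate to `u ^ (a ^ 2)` for every `a ≠ 0`, so the
spectrum of `π u` is stable under `z ↦ z ^ (a ^ 2)`. -/
theorem sub_one_le_two_mul_of_map_ne_one (hπ : ∃ g, π g ≠ 1) : p - 1 ≤ 2 * n := by
  classical
  set u : ZMod p → SL(2, ZMod p) := SpecialLinearGroup.transvection zero_ne_one
  have hu : π (u 1) ≠ 1 := fun h => hπ.elim fun g hg =>
    hg (map_eq_one_of_map_transvection_eq_one π h g)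
  have u_natCast (k : ℕ) : u k = u 1 ^ k := by
    rw [← nsmul_one]
    exact transvection_nsmul zero_ne_one 1 k
  have hup : π (u 1) ^ p = 1 := by
    rw [← map_pow, ← u_natCast, ZMod.natCast_self]
    simp [u]
  obtain ⟨z, hz, z_order⟩ := exists_mem_spectrum_orderOf_eq_prime hu hup
  refine (le_two_mul_card_image_pow_sq z_order).trans ?_
  gcongr
  refine (card_le_of_subset_spectrum (A := (π (u 1) : Matrix (Fin n) (Fin n) ℂ))
    fun y hy => ?_).trans_eq (Fintype.card_fin n)
  obtain ⟨a, -, rfl⟩ := Finset.mem_image.1 hy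
  have hconj : IsConj (u 1) (u 1 ^ ((a : ZMod p) ^ 2).val) := by
    rw [← u_natCast, ZMod.natCast_zmod_val, ← mul_one ((a : ZMod p) ^ 2)]
    exact isConj_transvection_sq_mul a.ne_zero 1
  rw [spectrum_map_eq_of_isConj π hconj, map_pow]
  exact spectrum.pow_mem_pow _ _ hz

theorem IsIrreducibleRep.norm_trace_mul_sqrt_le (hp : 3 ≤ p) (hπ : IsIrreducibleRep π)
    (hπ' : ∃ g, π g ≠ 1) {g : SL(2, ZMod p)} (hg : g ∉ Subgroup.center SL(2, ZMod p)) :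
    ‖(π g : Matrix (Fin n) (Fin n) ℂ).trace‖ * √p ≤ 6 * n := by
  have hdim := sub_one_le_two_mul_of_map_ne_one hπ'
  have : NeZero n := ⟨by lia⟩
  have hpn : (p : ℝ) ≤ 3 * n := by exact_mod_cast (by lia : p ≤ 3 * n)
  have hcentralizer : (Nat.card (Subgroup.centralizer {g}) : ℝ) ≤ 2 * p := by
    exact_mod_cast (card_centralizer_singleton_le hg).trans_eq (by rw [Nat.card_zmod])
  refine (sq_le_sq₀ (by positivity) (by positivity)).1 ?_
  calc (‖(π g : Matrix (Fin n) (Fin n) ℂ).trace‖ * √p) ^ 2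
      = ‖(π g : Matrix (Fin n) (Fin n) ℂ).trace‖ ^ 2 * (p : ℝ) := by
        rw [mul_pow, Real.sq_sqrt p.cast_nonneg]
    _ ≤ 2 * (p : ℝ) * p := by
        gcongr
        exact (hπ.sq_norm_trace_le_card_centralizer g).trans hcentralizer
    _ ≤ 2 * (3 * n : ℝ) * (3 * n) := by gcongr
    _ ≤ (6 * n : ℝ) ^ 2 := by nlinarith

end DimensionBound

section PolynomialCurves

open Polynomial

theorem exists_list_prod_add_smul_eq_sum {F A ι : Type*} [Field F] [Ring A] [Algebra F A]
    (a b : ι → A) (w : List ι) :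
    ∃ c : ℕ → A, c w.length = (w.map b).prod ∧
      ∀ t : F, (w.map fun l => a l + t • b l).prod =
        ∑ k ∈ Finset.range (w.length + 1), t ^ k • c k := by
  set f : ι → A[X] := fun l => C (a l) + C (b l) * X with hf
  have natDegree_f (l : ι) : (f l).natDegree ≤ 1 := by
    simpa only [hf, add_comm] using natDegree_linear_le
  refine ⟨(w.map f).prod.coeff, ?_, fun t => ?_⟩
  · have h := coeff_list_prod_of_natDegree_le (w.map f) 1 fun P hP => by
      obtain ⟨l, -, rfl⟩ := List.mem_map.1 hP
      exact natDegree_f l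
    rw [List.length_map, mul_one] at h
    rw [h, List.map_map]
    congr 2
    funext l
    simp [hf]
  · set ev : A[X] →+* A := eval₂RingHom' (.id A) (algebraMap F A t)
      fun x => (Algebra.commutes t x).symm
    have ev_f (l : ι) : ev (f l) = a l + t • b l := by
      simp [ev, hf, eval₂RingHom', Algebra.smul_def, Algebra.commutes t (b l)]
    have natDegree_prod : (w.map f).prod.natDegree ≤ w.length := by
      refine (natDegree_list_prod_le _).trans ?_
      rw [List.map_map]
      simpa using List.sum_le_card_nsmul (w.map (natDegree ∘ f)) 1
        (by simpa using fun l _ => natDegree_f l)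
    calc (w.map fun l => a l + t • b l).prod
        = ev (w.map f).prod := by simp only [map_list_prod, List.map_map, Function.comp_def, ev_f]
      _ = ∑ k ∈ Finset.range (w.length + 1), t ^ k • (w.map f).prod.coeff k := by
        simp only [ev, eval₂RingHom', RingHom.coe_mk, MonoidHom.coe_mk, OneHom.coe_mk]
        rw [eval₂_eq_sum_range' _ (Nat.lt_succ_of_le natDegree_prod)]
        simp only [RingHom.id_apply, ← map_pow, Algebra.smul_def, Algebra.commutes]

theorem card_filter_sum_pow_smul_mem_le {F V : Type*} [Field F] [Fintype F] [AddCommGroup V]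
    [Module F V] (W : Submodule F V) [DecidablePred (· ∈ W)] {c : ℕ → V} {m : ℕ} (hc : c m ∉ W) :
    (Finset.univ.filter fun t : F => ∑ k ∈ Finset.range (m + 1), t ^ k • c k ∈ W).card ≤ m := by
  obtain ⟨φ, hφ, hW⟩ := Submodule.exists_le_ker_of_notMem hc
  set P : F[X] := ∑ k ∈ Finset.range (m + 1), C (φ (c k)) * X ^ k with hP
  have coeff_P : P.coeff m = φ (c m) := by simp [hP, coeff_X_pow]
  have natDegree_P : P.natDegree ≤ m := natDegree_sum_le_of_forall_le _ _ fun k hk =>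
    (natDegree_C_mul_X_pow_le _ _).trans (Finset.mem_range_succ_iff.1 hk)
  refine (card_le_degree_of_subset_roots fun t ht => ?_).trans natDegree_P
  rw [mem_roots (by rintro h; simp [h, hφ.symm] at coeff_P)]
  have := hW (Finset.mem_filter.1 ht).2
  rw [LinearMap.mem_ker, map_sum] at this
  simpa only [P, IsRoot.def, eval_finsetSum, eval_mul, eval_C, eval_pow, eval_X, map_smul,
    smul_eq_mul, mul_comm] using this

end PolynomialCurves

section RankOne

open Matrix

variable {F ι : Type*} [Field F]

theorem vecMulVec_notMem_span_one [Finite ι] [DecidableEq ι] [Nontrivial ι] {u v : ι → F}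
    (hu : u ≠ 0) (hv : v ≠ 0) : vecMulVec u v ∉ Submodule.span F {(1 : Matrix ι ι F)} := by
  have := Fintype.ofFinite ι
  rw [Submodule.mem_span_singleton]
  rintro ⟨a, ha⟩
  have := congrArg det ha
  rw [det_vecMulVec, det_smul, det_one, mul_one] at this
  rw [pow_eq_zero_iff Fintype.card_ne_zero |>.1 this, zero_smul] at ha
  exact vecMulVec_ne_zero hu hv ha.symm

theorem exists_list_prod_vecMulVec_eq [Fintype ι] [DecidableEq ι] {κ : Type*} {u v : κ → ι → F}
    (hv : ∀ l, v l ≠ 0) (l : κ) (w : List κ) (hw : (l :: w).IsChain fun a b => v a ⬝ᵥ u b ≠ 0) :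
    ∃ y ≠ 0, ((l :: w).map fun k => vecMulVec (u k) (v k)).prod = vecMulVec (u l) y := by
  induction w generalizing l with
  | nil => exact ⟨v l, hv l, by simp⟩
  | cons k w ih =>
    obtain ⟨hlk, hw⟩ := List.isChain_cons_cons.1 hw
    obtain ⟨y, hy, hprod⟩ := ih k hw
    refine ⟨(v l ⬝ᵥ u k) • y, smul_ne_zero hlk hy, ?_⟩
    rw [List.map_cons, List.prod_cons, hprod, vecMulVec_mul_vecMulVec]

end RankOne

section RandomWords

open Matrix MatrixGroups

variable {F α : Type*} [Field F]

/-- A tuple of elements of `SL(2, F)` depending on a parameter `t`, used to randomize words. The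
tuple is uniformly distributed when `z` is, while for fixed `z` every word in it is polynomial in
`t`. -/
def transvectionTuple (z : α × Bool → SL(2, F)) (t : F) (i : α) : SL(2, F) :=
  z (i, true) * SpecialLinearGroup.transvection zero_ne_one t * (z (i, false))⁻¹

/-- The column vector of the rank-one coefficient of `t` in the letter `l` of
`transvectionTuple z t`. -/
def letterColumn (z : α × Bool → SL(2, F)) (l : α × Bool) : Fin 2 → F :=
  fun i => (z l : Matrix (Fin 2) (Fin 2) F) i 0

/-- The row vector of the rank-one coefficient of `t` in the letter `l` of
`transvectionTuple z t`. -/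
def letterRow (z : α × Bool → SL(2, F)) (l : α × Bool) : Fin 2 → F :=
  (cond l.2 1 (-1) : F) • ((z (l.1, !l.2))⁻¹ : SL(2, F)).1 1

theorem coe_letter_transvectionTuple (z : α × Bool → SL(2, F)) (t : F) (l : α × Bool) :
    ((cond l.2 (transvectionTuple z t l.1) (transvectionTuple z t l.1)⁻¹ : SL(2, F)) :
        Matrix (Fin 2) (Fin 2) F) =
      ((z l * (z (l.1, !l.2))⁻¹ : SL(2, F)) : Matrix (Fin 2) (Fin 2) F) +
        t • vecMulVec (letterColumn z l) (letterRow z l) := by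
  set ε : F := cond l.2 1 (-1) with hε
  have group_form : cond l.2 (transvectionTuple z t l.1) (transvectionTuple z t l.1)⁻¹ =
      z l * SpecialLinearGroup.transvection zero_ne_one (ε * t) * (z (l.1, !l.2))⁻¹ := by
    obtain ⟨i, _ | _⟩ := l <;>
      simp [transvectionTuple, hε, SpecialLinearGroup.transvection_inv, mul_assoc]
  have rank_one (g h : SL(2, F)) : g.1 * single 0 1 (ε * t) * h.1 =
      t • vecMulVec (fun i => g.1 i 0) (ε • h.1 1) := by
    ext i j
    simp only [Matrix.mul_apply, single_apply, mul_ite, mul_zero, Fin.sum_univ_two, true_and,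
      zero_ne_one, false_and, ↓reduceIte, add_zero, ite_mul, zero_mul, Finset.sum_ite_eq,
      Finset.mem_univ, vecMulVec_smul, Matrix.smul_apply, vecMulVec_apply, smul_eq_mul]
    ring
  rw [group_form, Matrix.SpecialLinearGroup.coe_mul, Matrix.SpecialLinearGroup.coe_mul,
    SpecialLinearGroup.transvection_coe, mul_add, add_mul, mul_one, rank_one,
    Matrix.SpecialLinearGroup.coe_mul]
  rfl

theorem letterColumn_ne_zero (z : α × Bool → SL(2, F)) (l : α × Bool) : letterColumn z l ≠ 0 := by
  intro h
  have hdet := (z l).det_coe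
  rw [det_fin_two, show (z l).1 0 0 = 0 from congrFun h 0,
    show (z l).1 1 0 = 0 from congrFun h 1] at hdet
  simp at hdet

theorem letterRow_ne_zero (z : α × Bool → SL(2, F)) (l : α × Bool) : letterRow z l ≠ 0 := by
  refine smul_ne_zero (by cases l.2 <;> simp) fun h => ?_
  have hdet := ((z (l.1, !l.2))⁻¹).det_coe
  rw [det_fin_two, congrFun h 0, congrFun h 1] at hdet
  simp at hdet

theorem letterRow_dotProduct_letterColumn (z : α × Bool → SL(2, F)) (k l : α × Bool) :
    letterRow z k ⬝ᵥ letterColumn z l =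
      cond k.2 1 (-1) * ((z (k.1, !k.2))⁻¹ * z l : SL(2, F)).1 1 0 := by
  rw [letterRow, smul_dotProduct, smul_eq_mul, Matrix.SpecialLinearGroup.coe_mul, Matrix.mul_apply]
  rfl

/-- The leading coefficient, as a polynomial in `t`, of the word `w` in `transvectionTuple z t` does
not cancel. -/
def NoncancellingWord (z : α × Bool → SL(2, F)) (w : List (α × Bool)) : Prop :=
  w.IsChain fun k l => letterRow z k ⬝ᵥ letterColumn z l ≠ 0

theorem coe_mem_span_one_of_mem_center {g : SL(2, F)} (hg : g ∈ Subgroup.center SL(2, F)) :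
    (g : Matrix (Fin 2) (Fin 2) F) ∈ Submodule.span F {(1 : Matrix (Fin 2) (Fin 2) F)} := by
  obtain ⟨a, -, ha⟩ := Matrix.SpecialLinearGroup.mem_center_iff.1 hg
  rw [← ha, Submodule.mem_span_singleton]
  exact ⟨a, by rw [scalar_apply, smul_one_eq_diagonal]⟩

theorem eq_of_mul_transvection_eq {g h : SL(2, F)} (hg : g 1 0 = 0) (hh : h 1 0 = 0) {s t : F}
    (hst : g * SpecialLinearGroup.transvection one_ne_zero s =
      h * SpecialLinearGroup.transvection one_ne_zero t) : s = t := by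
  have bottom_row (k : SL(2, F)) (hk : k 1 0 = 0) (r : F) :
      (k * SpecialLinearGroup.transvection one_ne_zero r : SL(2, F)) 1 0 = k 1 1 * r ∧
        (k * SpecialLinearGroup.transvection one_ne_zero r : SL(2, F)) 1 1 = k 1 1 := by
    simp [Matrix.SpecialLinearGroup.coe_mul, SpecialLinearGroup.transvection_coe, hk, mul_add]
  obtain ⟨g_zero, g_one⟩ := bottom_row g hg s
  obtain ⟨h_zero, h_one⟩ := bottom_row h hh t
  have hgh : g 1 1 = h 1 1 := by rw [← g_one, ← h_one, hst]
  have hg_ne : g 1 1 ≠ 0 := fun h0 => by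
    have hdet := g.det_coe
    rw [det_fin_two, hg, h0] at hdet
    simp at hdet
  refine mul_left_cancel₀ hg_ne ?_
  rw [← g_zero, hst, h_zero, hgh]

/-- For fixed `t`, reparametrization of the tuples `z` by `transvectionTuple z t` and half of the
entries of `z`. -/
def transvectionTupleEquiv (t : F) :
    (α × Bool → SL(2, F)) ≃ (α → SL(2, F)) × (α → SL(2, F)) where
  toFun z := (transvectionTuple z t, fun i => z (i, true))
  invFun x l := cond l.2 (x.2 l.1)
    ((x.1 l.1)⁻¹ * x.2 l.1 * SpecialLinearGroup.transvection zero_ne_one t)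
  left_inv z := by
    ext1 ⟨i, _ | _⟩ <;> simp [transvectionTuple, mul_assoc]
  right_inv x := by
    refine Prod.ext (funext fun i => ?_) (funext fun i => ?_) <;> simp [transvectionTuple]

variable [DecidableEq F] {w : List (α × Bool)}

instance (z : α × Bool → SL(2, F)) : Decidable (NoncancellingWord z w) :=
  inferInstanceAs (Decidable (List.IsChain _ w))

variable [Fintype F]

theorem NoncancellingWord.card_filter_mem_center_le {z : α × Bool → SL(2, F)}
    (hz : NoncancellingWord z w) (hw : w ≠ []) :
    (Finset.univ.filter fun t : F => FreeGroup.lift (transvectionTuple z t) (FreeGroup.mk w) ∈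
      Subgroup.center SL(2, F)).card ≤ w.length := by
  classical
  obtain ⟨c, c_length, hc⟩ := exists_list_prod_add_smul_eq_sum (F := F)
    (fun l => ((z l * (z (l.1, !l.2))⁻¹ : SL(2, F)) : Matrix (Fin 2) (Fin 2) F))
    (fun l => vecMulVec (letterColumn z l) (letterRow z l)) w
  have c_length_notMem : c w.length ∉ Submodule.span F {(1 : Matrix (Fin 2) (Fin 2) F)} := by
    obtain ⟨l, w', rfl⟩ := List.exists_cons_of_ne_nil hw
    obtain ⟨y, hy, hprod⟩ := exists_list_prod_vecMulVec_eq (letterRow_ne_zero z) l w' hz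
    rw [c_length, hprod]
    exact vecMulVec_notMem_span_one (letterColumn_ne_zero z l) hy
  refine (Finset.card_le_card fun t ht => ?_).trans
    (card_filter_sum_pow_smul_mem_le _ c_length_notMem)
  refine Finset.mem_filter.2 ⟨Finset.mem_univ _, ?_⟩
  have := coe_mem_span_one_of_mem_center (Finset.mem_filter.1 ht).2
  rw [FreeGroup.lift_mk, ← SpecialLinearGroup.coeMonoidHom_apply, map_list_prod,
    List.map_map] at this
  rw [← hc]
  simpa only [Function.comp_def, SpecialLinearGroup.coeMonoidHom_apply,
    coe_letter_transvectionTuple] using this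

theorem card_filter_inv_mul_apply_eq_zero_mul_card_le {ι : Type*} [Fintype ι] [DecidableEq ι]
    {k l : ι} (hkl : k ≠ l) :
    (Finset.univ.filter fun z : ι → SL(2, F) => ((z k)⁻¹ * z l : SL(2, F)) 1 0 = 0).card *
      Fintype.card F ≤ Fintype.card (ι → SL(2, F)) := by
  rw [← Finset.card_univ (α := F), ← Finset.card_product, ← Finset.card_univ]
  refine Finset.card_le_card_of_injOn (fun x => Function.update x.1 l
    (x.1 l * SpecialLinearGroup.transvection one_ne_zero x.2)) (fun _ _ => Finset.mem_univ _) ?_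
  rintro ⟨z, s⟩ hz ⟨z', s'⟩ hz' hzz'
  dsimp only at hzz'
  replace hz := (Finset.mem_filter.1 (Finset.mem_product.1 hz).1).2
  replace hz' := (Finset.mem_filter.1 (Finset.mem_product.1 hz').1).2
  have hk : z k = z' k := by simpa [hkl] using congrFun hzz' k
  have hl : z l * SpecialLinearGroup.transvection one_ne_zero s =
      z' l * SpecialLinearGroup.transvection one_ne_zero s' := by simpa using congrFun hzz' l
  obtain rfl : s = s' := eq_of_mul_transvection_eq hz hz'
    (by dsimp only; rw [mul_assoc, hl, hk, mul_assoc])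
  refine Prod.ext (funext fun i => ?_) rfl
  obtain rfl | hi := eq_or_ne i l
  · exact mul_right_cancel hl
  · simpa [hi] using congrFun hzz' i

theorem card_filter_not_noncancellingWord_mul_card_le [Fintype α] [DecidableEq α]
    (hw : FreeGroup.IsReduced w) :
    (Finset.univ.filter fun z : α × Bool → SL(2, F) => ¬ NoncancellingWord z w).card *
      Fintype.card F ≤ w.length * Fintype.card (α × Bool → SL(2, F)) := by
  induction w with
  | nil => simp [NoncancellingWord]
  | cons k w ih =>
    cases w with
    | nil => simp [NoncancellingWord]
    | cons l w =>
      obtain ⟨hkl, hw⟩ := List.isChain_cons_cons.1 hw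
      have hne : (k.1, !k.2) ≠ l := by
        rintro rfl
        simp at hkl
      have hunion : (Finset.univ.filter fun z : α × Bool → SL(2, F) =>
          ¬ NoncancellingWord z (k :: l :: w)) ⊆
          (Finset.univ.filter fun z => ((z (k.1, !k.2))⁻¹ * z l : SL(2, F)) 1 0 = 0) ∪
            Finset.univ.filter fun z => ¬ NoncancellingWord z (l :: w) := by
        intro z hz
        have hε : (cond k.2 1 (-1) : F) ≠ 0 := by cases k.2 <;> simp
        simp only [NoncancellingWord, Finset.mem_filter, Finset.mem_univ, true_and,
          Finset.mem_union, List.isChain_cons_cons, letterRow_dotProduct_letterColumn, ne_eq,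
          mul_eq_zero, hε, false_or] at hz ⊢
        tauto
      calc _ ≤ _ * Fintype.card F :=
            Nat.mul_le_mul_right _ ((Finset.card_le_card hunion).trans (Finset.card_union_le _ _))
        _ ≤ Fintype.card (α × Bool → SL(2, F)) +
              (l :: w).length * Fintype.card (α × Bool → SL(2, F)) := by
            rw [add_mul]
            exact add_le_add (card_filter_inv_mul_apply_eq_zero_mul_card_le hne) (ih hw)
        _ = (k :: l :: w).length * Fintype.card (α × Bool → SL(2, F)) := by
            rw [List.length_cons (a := k), add_one_mul, add_comm]

theorem sum_card_filter_transvectionTuple [Fintype α] [DecidableEq α] (P : (α → SL(2, F)) → Prop)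
    [DecidablePred P] :
    ∑ z : α × Bool → SL(2, F), (Finset.univ.filter fun t => P (transvectionTuple z t)).card =
      (Finset.univ.filter P).card * Fintype.card (α → SL(2, F)) * Fintype.card F := by
  have fixed_t (t : F) :
      (Finset.univ.filter fun z : α × Bool → SL(2, F) => P (transvectionTuple z t)).card =
        (Finset.univ.filter P).card * Fintype.card (α → SL(2, F)) := by
    rw [← Finset.card_univ (α := α → SL(2, F)), ← Finset.card_product]
    refine Finset.card_equiv (transvectionTupleEquiv t) fun z => ?_
    simp [transvectionTupleEquiv]
  calc _ = ∑ t : F, (Finset.univ.filter fun z : α × Bool → SL(2, F) =>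
        P (transvectionTuple z t)).card := by
        simp only [Finset.card_filter]
        exact Finset.sum_comm
    _ = _ := by
        simp only [fixed_t, Finset.sum_const, Finset.card_univ, smul_eq_mul]
        exact mul_comm _ _

theorem card_filter_lift_mem_center_mul_card_le [Fintype α] [DecidableEq α]
    (hw : FreeGroup.IsReduced w) (hw' : w ≠ []) :
    (Finset.univ.filter fun S : α → SL(2, F) =>
      FreeGroup.lift S (FreeGroup.mk w) ∈ Subgroup.center SL(2, F)).card * Fintype.card F ≤
      2 * w.length * Fintype.card (α → SL(2, F)) := by
  set N := Fintype.card (α → SL(2, F))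
  have card_sq : Fintype.card (α × Bool → SL(2, F)) = N * N := by
    rw [Fintype.card_congr (transvectionTupleEquiv (0 : F)), Fintype.card_prod]
  have pointwise (z : α × Bool → SL(2, F)) :
      (Finset.univ.filter fun t : F => FreeGroup.lift (transvectionTuple z t) (FreeGroup.mk w) ∈
        Subgroup.center SL(2, F)).card ≤
        w.length + (if ¬ NoncancellingWord z w then 1 else 0) * Fintype.card F := by
    by_cases hz : NoncancellingWord z w
    · exact (hz.card_filter_mem_center_le hw').trans le_self_add
    · simpa [hz] using (Finset.card_le_univ _).trans le_add_self
  have hsum := Finset.sum_le_sum fun z (_ : z ∈ Finset.univ) => pointwise z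
  rw [sum_card_filter_transvectionTuple (fun S => FreeGroup.lift S (FreeGroup.mk w) ∈
    Subgroup.center SL(2, F)), Finset.sum_add_distrib, ← Finset.sum_mul, ← Finset.card_filter,
    Finset.sum_const, Finset.card_univ, smul_eq_mul, card_sq] at hsum
  have hbad := card_filter_not_noncancellingWord_mul_card_le (F := F) hw
  rw [card_sq] at hbad
  have hN : 0 < N := Fintype.card_pos
  refine Nat.le_of_mul_le_mul_right ?_ hN
  linarith

variable {n p : ℕ} [Fact p.Prime] {π : SL(2, ZMod p) →* unitaryGroup (Fin n) ℂ}

theorem IsIrreducibleRep.sum_norm_trace_lift_mul_sqrt_le [Fintype α] [DecidableEq α] (hp : 3 ≤ p)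
    (hπ : IsIrreducibleRep π) (hπ' : ∃ g, π g ≠ 1) (hw : FreeGroup.IsReduced w) (hw' : w ≠ []) :
    (∑ S : α → SL(2, ZMod p),
      ‖(π (FreeGroup.lift S (FreeGroup.mk w)) : Matrix (Fin n) (Fin n) ℂ).trace‖) * √p ≤
      8 * w.length * n * Fintype.card (α → SL(2, ZMod p)) := by
  set central := Finset.univ.filter fun S : α → SL(2, ZMod p) =>
    FreeGroup.lift S (FreeGroup.mk w) ∈ Subgroup.center SL(2, ZMod p) with hcentral
  set N := Fintype.card (α → SL(2, ZMod p))
  have pointwise (S : α → SL(2, ZMod p)) :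
      ‖(π (FreeGroup.lift S (FreeGroup.mk w)) : Matrix (Fin n) (Fin n) ℂ).trace‖ * √p ≤
        6 * n + if S ∈ central then n * √p else 0 := by
    by_cases hS : S ∈ central
    · rw [if_pos hS]
      refine le_add_of_nonneg_of_le (by positivity) ?_
      gcongr
      exact norm_trace_le_of_mem_unitaryGroup (π _).2
    · rw [if_neg hS, add_zero]
      exact hπ.norm_trace_mul_sqrt_le hp hπ' fun h =>
        hS (Finset.mem_filter.2 ⟨Finset.mem_univ _, h⟩)
  have card_central : (central.card : ℝ) * √p ≤ 2 * w.length * N := by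
    have h := card_filter_lift_mem_center_mul_card_le (F := ZMod p) hw hw'
    rw [ZMod.card] at h
    have hp1 : (1 : ℝ) ≤ p := by exact_mod_cast (Fact.out : p.Prime).one_le
    refine le_trans ?_ (by exact_mod_cast h : (central.card : ℝ) * p ≤ 2 * w.length * N)
    gcongr
    exact Real.sqrt_le_iff.2 ⟨by positivity, le_self_pow₀ hp1 two_ne_zero⟩
  have one_le_length : (1 : ℝ) ≤ w.length := by
    exact_mod_cast List.length_pos_iff.2 hw'
  calc _ ≤ ∑ S, (6 * n + if S ∈ central then n * √p else 0) := by
        rw [Finset.sum_mul]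
        exact Finset.sum_le_sum fun S _ => pointwise S
    _ = 6 * 1 * n * N + central.card * √p * n := by
        rw [Finset.sum_add_distrib, Finset.sum_const, Finset.card_univ, Finset.sum_ite_mem,
          Finset.univ_inter, Finset.sum_const, nsmul_eq_mul, nsmul_eq_mul]
        ring
    _ ≤ 6 * w.length * n * N + 2 * w.length * N * n := by gcongr
    _ = 8 * w.length * n * N := by ring

end RandomWords

section Geronimus

open Matrix Polynomial

/-- The Geronimus polynomials, orthogonal for the Kesten–McKay law when `q = 2d - 1`. At the
adjacency operator of a `(q + 1)`-regular tree, `geronimus q m` is the operator summing over the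
vertices at distance `m`. -/
noncomputable def geronimus {R : Type*} [CommRing R] (q : R) : ℕ → R[X]
  | 0 => 1
  | 1 => X
  | 2 => X ^ 2 - C (q + 1)
  | m + 3 => X * geronimus q (m + 2) - C q * geronimus q (m + 1)

variable {α : Type*}

theorem isReduced_cons_cons_iff_ne (l l' : α × Bool) (w : List (α × Bool)) :
    FreeGroup.IsReduced (l :: l' :: w) ↔ l' ≠ (l.1, !l.2) ∧ FreeGroup.IsReduced (l' :: w) := by
  rw [FreeGroup.isReduced_cons_cons, ne_eq, Prod.ext_iff]
  refine and_congr_left fun _ => ?_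
  cases l.2 <;> cases l'.2 <;> simp [eq_comm]

variable [Fintype α]

open Classical in
/-- The sum of the products `g l * g l₁ * ⋯ * g lₘ` over the reduced words `l, l₁, …, lₘ` with first
letter `l`, the inverse of a letter being obtained by flipping its Boolean. -/
noncomputable def reducedWordSum {A : Type*} [Semiring A] (g : α × Bool → A) (m : ℕ)
    (l : α × Bool) : A :=
  ∑ w : Fin m → α × Bool,
    if FreeGroup.IsReduced (l :: List.ofFn w) then ((l :: List.ofFn w).map g).prod else 0

theorem reducedWordSum_zero {A : Type*} [Semiring A] (g : α × Bool → A) (l : α × Bool) :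
    reducedWordSum g 0 l = g l := by
  simp [reducedWordSum]

theorem reducedWordSum_succ {A : Type*} [Ring A] (g : α × Bool → A) (m : ℕ) (l : α × Bool) :
    reducedWordSum g (m + 1) l =
      g l * (∑ l', reducedWordSum g m l' - reducedWordSum g m (l.1, !l.2)) := by
  classical
  calc _ = ∑ l', ∑ w : Fin m → α × Bool, if l' ≠ (l.1, !l.2) then
          g l * if FreeGroup.IsReduced (l' :: List.ofFn w) then
            ((l' :: List.ofFn w).map g).prod else 0 else 0 := by
        rw [reducedWordSum, ← (Fin.consEquiv fun _ => α × Bool).sum_comp, Fintype.sum_prod_type]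
        refine Finset.sum_congr rfl fun l' _ => Finset.sum_congr rfl fun w _ => ?_
        rw [show (Fin.consEquiv fun _ => α × Bool) (l', w) = Fin.cons l' w from rfl]
        simp only [isReduced_cons_cons_iff_ne, List.ofFn_cons, ite_and,
          List.map_cons, List.prod_cons, mul_ite, mul_zero]
    _ = g l * ∑ l' ∈ Finset.univ.erase (l.1, !l.2), reducedWordSum g m l' := by
        rw [Finset.mul_sum, ← Finset.filter_ne', Finset.sum_filter]
        refine Finset.sum_congr rfl fun l' _ => ?_
        split_ifs <;> simp [reducedWordSum, Finset.mul_sum]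
    _ = _ := by rw [Finset.sum_erase_eq_sub (Finset.mem_univ _)]

theorem sum_reducedWordSum {R A : Type*} [CommRing R] [Ring A] [Algebra R A] {g : α × Bool → A}
    (hg : ∀ l, g l * g (l.1, !l.2) = 1) (m : ℕ) :
    ∑ l, reducedWordSum g m l =
      aeval (∑ l, g l) (geronimus (2 * Fintype.card α - 1 : R) (m + 1)) := by
  have sum_succ (m : ℕ) : ∑ l, reducedWordSum g (m + 1) l =
      (∑ l, g l) * ∑ l, reducedWordSum g m l - ∑ l, g l * reducedWordSum g m (l.1, !l.2) := by
    simp only [reducedWordSum_succ, mul_sub, Finset.sum_sub_distrib, Finset.sum_mul]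
  have sum_inv_succ (m : ℕ) : ∑ l, g l * reducedWordSum g (m + 1) (l.1, !l.2) =
      (2 * (Fintype.card α : A) - 1) * ∑ l, reducedWordSum g m l := by
    have h (l : α × Bool) : g l * reducedWordSum g (m + 1) (l.1, !l.2) =
        ∑ l', reducedWordSum g m l' - reducedWordSum g m l := by
      rw [reducedWordSum_succ, ← mul_assoc, hg, one_mul, Bool.not_not]
    simp only [h, Finset.sum_sub_distrib, Finset.sum_const, Finset.card_univ,
      Fintype.card_prod, Fintype.card_bool, nsmul_eq_mul, Nat.cast_mul, Nat.cast_ofNat]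
    rw [sub_mul, one_mul, Nat.cast_comm]
  have sum_inv_zero : ∑ l, g l * reducedWordSum g 0 (l.1, !l.2) = 2 * (Fintype.card α : A) := by
    simp [reducedWordSum_zero, hg, Nat.cast_comm]
  induction m using Nat.strong_induction_on with
  | _ m ih =>
    match m with
    | 0 => simp [reducedWordSum_zero, geronimus]
    | 1 =>
      rw [sum_succ, sum_inv_zero]
      simp [reducedWordSum_zero, geronimus, sq, map_ofNat]
    | m + 2 =>
      rw [sum_succ, sum_inv_succ, ih (m + 1) (by omega), ih m (by omega)]
      simp [geronimus, map_ofNat]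

section Representation

variable {G : Type*} [Group G] {n : ℕ} (π : G →* unitaryGroup (Fin n) ℂ)

theorem Amat_eq_sum_lift {d : ℕ} (S : Fin d → G) :
    Amat π S = ∑ l, (π (FreeGroup.lift S (FreeGroup.mk [l])) : Matrix (Fin n) (Fin n) ℂ) := by
  rw [Amat, Fintype.sum_prod_type]
  refine Finset.sum_congr rfl fun i _ => ?_
  have coe_inv : (π (S i) : Matrix (Fin n) (Fin n) ℂ)⁻¹ = (π (S i)⁻¹ : Matrix _ _ ℂ) :=
    Matrix.inv_eq_right_inv (by rw [← UnitaryGroup.mul_val, ← map_mul]; simp)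
  simp [coe_inv]

theorem coe_map_lift_mk {α : Type*} (S : α → G) (w : List (α × Bool)) :
    (π (FreeGroup.lift S (FreeGroup.mk w)) : Matrix (Fin n) (Fin n) ℂ) =
      (w.map fun l =>
        (π (FreeGroup.lift S (FreeGroup.mk [l])) : Matrix (Fin n) (Fin n) ℂ)).prod := by
  induction w with
  | nil => simp
  | cons l w ih =>
    rw [List.map_cons, List.prod_cons, ← ih, ← UnitaryGroup.mul_val, ← map_mul, ← map_mul]
    rfl

open Classical in
theorem norm_trace_aeval_Amat_geronimus_le {d : ℕ} (S : Fin d → G) (m : ℕ) :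
    ‖(aeval (Amat π S) (geronimus (2 * d - 1 : ℝ) (m + 1))).trace‖ ≤
      ∑ l : Fin d × Bool, ∑ w : Fin m → Fin d × Bool,
        if FreeGroup.IsReduced (l :: List.ofFn w) then
          ‖(π (FreeGroup.lift S (FreeGroup.mk (l :: List.ofFn w))) :
            Matrix (Fin n) (Fin n) ℂ).trace‖ else 0 := by
  have mul_inv_letter (l : Fin d × Bool) :
      (π (FreeGroup.lift S (FreeGroup.mk [l])) : Matrix (Fin n) (Fin n) ℂ) *
        π (FreeGroup.lift S (FreeGroup.mk [(l.1, !l.2)])) = 1 := by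
    rw [← UnitaryGroup.mul_val, ← map_mul]
    cases h : l.2 <;> simp [h]
  have h := sum_reducedWordSum (R := ℝ) mul_inv_letter m
  rw [← Amat_eq_sum_lift, Fintype.card_fin] at h
  rw [← h, trace_sum]
  refine norm_sum_le_of_le _ fun l _ => ?_
  rw [reducedWordSum, trace_sum]
  refine norm_sum_le_of_le _ fun w _ => ?_
  rw [← coe_map_lift_mk]
  split_ifs <;> simp

end Representation

theorem IsIrreducibleRep.sum_norm_trace_aeval_geronimus_mul_sqrt_le {p n : ℕ} [Fact p.Prime]
    {π : SL 2 p →* unitaryGroup (Fin n) ℂ} (hp : 3 ≤ p) (hπ : IsIrreducibleRep π)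
    (hπ' : ∃ g, π g ≠ 1) (d m : ℕ) :
    (∑ S : Fin d → SL 2 p, ‖(aeval (Amat π S) (geronimus (2 * d - 1 : ℝ) (m + 1))).trace‖) * √p ≤
      (2 * d) ^ (m + 1) * (8 * (m + 1) * n * Fintype.card (Fin d → SL 2 p)) := by
  classical
  calc _ ≤ (∑ S : Fin d → SL 2 p, ∑ l : Fin d × Bool, ∑ w : Fin m → Fin d × Bool,
        if FreeGroup.IsReduced (l :: List.ofFn w) then
          ‖(π (FreeGroup.lift S (FreeGroup.mk (l :: List.ofFn w))) :
            Matrix (Fin n) (Fin n) ℂ).trace‖ else 0) * √p := by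
        gcongr with S
        exact norm_trace_aeval_Amat_geronimus_le π S m
    _ = ∑ l : Fin d × Bool, ∑ w : Fin m → Fin d × Bool,
        if FreeGroup.IsReduced (l :: List.ofFn w) then
          (∑ S : Fin d → SL 2 p, ‖(π (FreeGroup.lift S (FreeGroup.mk (l :: List.ofFn w))) :
            Matrix (Fin n) (Fin n) ℂ).trace‖) * √p else 0 := by
        rw [Finset.sum_comm, Finset.sum_mul]
        refine Finset.sum_congr rfl fun l _ => ?_
        rw [Finset.sum_comm, Finset.sum_mul]
        refine Finset.sum_congr rfl fun w _ => ?_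
        split_ifs <;> simp
    _ ≤ ∑ _l : Fin d × Bool, ∑ _w : Fin m → Fin d × Bool,
          (8 * (m + 1) * n * Fintype.card (Fin d → SL 2 p) : ℝ) := by
        refine Finset.sum_le_sum fun l _ => Finset.sum_le_sum fun w _ => ?_
        split_ifs with hw
        · simpa using hπ.sum_norm_trace_lift_mul_sqrt_le hp hπ' hw (List.cons_ne_nil _ _)
        · positivity
    _ = _ := by
        simp only [Finset.sum_const, Finset.card_univ, Fintype.card_prod, Fintype.card_fun,
          Fintype.card_fin, Fintype.card_bool, nsmul_eq_mul]
        push_cast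
        ring

end Geronimus

section SpectralMeasure

open Matrix Polynomial

section Hermitian

variable {n : ℕ} {A : Matrix (Fin n) (Fin n) ℂ}

theorem trace_aeval_of_isHermitian (hA : A.IsHermitian) (P : ℝ[X]) :
    (aeval A P).trace = ∑ j, ((P.eval (hA.eigenvalues j) : ℝ) : ℂ) := by
  have aeval_eq : aeval A P = hA.cfc P.eval := (cfc_polynomial P A hA).symm.trans (hA.cfc_eq _)
  rw [aeval_eq, IsHermitian.cfc, Unitary.conjStarAlgAut_apply,
    trace_mul_comm, ← mul_assoc]
  simp

theorem specMeasure_of_isHermitian (hA : A.IsHermitian) :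
    specMeasure A = (n : ENNReal)⁻¹ • ∑ j : Fin n, Measure.dirac (hA.eigenvalues j) :=
  dif_pos hA

theorem isProbabilityMeasure_specMeasure [NeZero n] (hA : A.IsHermitian) :
    IsProbabilityMeasure (specMeasure A) := by
  refine ⟨?_⟩
  simp [specMeasure_of_isHermitian hA, ENNReal.inv_mul_cancel, NeZero.ne n]

theorem integral_specMeasure (hA : A.IsHermitian) (f : ℝ → ℝ) :
    ∫ x, f x ∂specMeasure A = (n : ℝ)⁻¹ * ∑ j, f (hA.eigenvalues j) := by
  rw [specMeasure_of_isHermitian hA, integral_smul_measure,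
    integral_finsetSum_measure fun _ _ => integrable_dirac (by simp)]
  simp

end Hermitian

section Representation

variable {G : Type*} [Group G] {n d : ℕ} (π : G →* unitaryGroup (Fin n) ℂ) (S : Fin d → G)

theorem isHermitian_Amat : (Amat π S).IsHermitian := by
  have inv_eq (i : Fin d) : ((π (S i))⁻¹ : Matrix (Fin n) (Fin n) ℂ) = (π (S i) : Matrix _ _ ℂ)ᴴ :=
    Matrix.inv_eq_right_inv (mem_unitaryGroup_iff.1 (π (S i)).2)
  rw [IsHermitian, Amat, conjTranspose_sum]
  refine Finset.sum_congr rfl fun i _ => ?_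
  rw [inv_eq, conjTranspose_add, conjTranspose_conjTranspose, add_comm]

open scoped Matrix.Norms.L2Operator in
theorem abs_eigenvalues_Amat_le (j : Fin n) : |(isHermitian_Amat π S).eigenvalues j| ≤ 2 * d := by
  have : Nonempty (Fin n) := ⟨j⟩
  have norm_le : ‖Amat π S‖ ≤ 2 * d := by
    rw [Amat_eq_sum_lift]
    refine (norm_sum_le_of_le _ fun l _ => ?_).trans_eq (b := ∑ _l : Fin d × Bool, (1 : ℝ)) ?_
    · exact (CStarRing.norm_of_mem_unitary (π _).2).le
    · simp [mul_comm]
  have h := spectrum.norm_le_norm_of_mem ((isHermitian_Amat π S).eigenvalues_mem_spectrum_real j)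
  exact h.trans norm_le

theorem specMeasure_Amat_compl_Icc :
    specMeasure (Amat π S) (Set.Icc (-(2 * d : ℝ)) (2 * d))ᶜ = 0 := by
  rw [specMeasure_of_isHermitian (isHermitian_Amat π S)]
  simp [← abs_le, abs_eigenvalues_Amat_le]

end Representation

theorem IsIrreducibleRep.sum_abs_integral_geronimus_specMeasure_mul_sqrt_le {p n : ℕ}
    [Fact p.Prime] [NeZero n] {π : SL 2 p →* unitaryGroup (Fin n) ℂ} (hp : 3 ≤ p)
    (hπ : IsIrreducibleRep π) (hπ' : ∃ g, π g ≠ 1) (d m : ℕ) :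
    (∑ S : Fin d → SL 2 p,
      |∫ x, (geronimus (2 * d - 1 : ℝ) (m + 1)).eval x ∂specMeasure (Amat π S)|) * √p ≤
      (2 * d) ^ (m + 1) * (8 * (m + 1) * Fintype.card (Fin d → SL 2 p)) := by
  have abs_integral_eq (S : Fin d → SL 2 p) :
      |∫ x, (geronimus (2 * d - 1 : ℝ) (m + 1)).eval x ∂specMeasure (Amat π S)| =
        (n : ℝ)⁻¹ * ‖(aeval (Amat π S) (geronimus (2 * d - 1 : ℝ) (m + 1))).trace‖ := by
    rw [integral_specMeasure (isHermitian_Amat π S),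
      trace_aeval_of_isHermitian (isHermitian_Amat π S), ← Complex.ofReal_sum, Complex.norm_real,
      Real.norm_eq_abs, abs_mul, abs_of_nonneg (by positivity : (0 : ℝ) ≤ (n : ℝ)⁻¹)]
  have hn : (0 : ℝ) < n := Nat.cast_pos.2 (NeZero.pos n)
  simp only [abs_integral_eq, ← Finset.mul_sum]
  rw [mul_assoc, inv_mul_le_iff₀ hn]
  refine (hπ.sum_norm_trace_aeval_geronimus_mul_sqrt_le hp hπ' d m).trans_eq ?_
  ring

end SpectralMeasure

section KestenMcKay

open Real Polynomial

theorem integral_comp_cos_zero_two_pi {F : ℝ → ℝ} (hF : Continuous fun θ => F (cos θ)) :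
    ∫ θ in 0..2 * π, F (cos θ) = 2 * ∫ θ in 0..π, F (cos θ) := by
  have reflect : ∫ θ in π..2 * π, F (cos θ) = ∫ θ in 0..π, F (cos θ) := by
    have h := intervalIntegral.integral_comp_sub_left (a := 0) (b := π)
      (fun θ => F (cos θ)) (2 * π)
    rw [sub_zero, two_mul, add_sub_cancel_right, ← two_mul] at h
    simpa only [cos_two_pi_sub] using h.symm
  rw [← intervalIntegral.integral_add_adjacent_intervals (hF.intervalIntegrable 0 π)
    (hF.intervalIntegrable π (2 * π)), reflect, two_mul]

section MeanValue

variable {q : ℝ}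

theorem ofReal_sub_sq_ne_zero (hq : 1 < q) {z : ℂ} (hz : ‖z‖ ≤ 1) : (q : ℂ) - z ^ 2 ≠ 0 := by
  intro h
  have norm_sq : ‖z‖ ^ 2 = q := by
    rw [← norm_pow, ← sub_eq_zero.1 h, Complex.norm_real, norm_eq_abs, abs_of_pos (by linarith)]
  nlinarith [norm_nonneg z]

theorem diffContOnCl_pow_mul_sq_sub_one_div (hq : 1 < q) (m : ℕ) :
    DiffContOnCl ℂ (fun z : ℂ => z ^ m * (z ^ 2 - 1) / (2 * Complex.I * (q - z ^ 2)))
      (Metric.ball 0 1) := by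
  refine DifferentiableOn.diffContOnCl fun z hz => DifferentiableAt.differentiableWithinAt ?_
  rw [closure_ball _ one_ne_zero, mem_closedBall_zero_iff] at hz
  have := ofReal_sub_sq_ne_zero hq hz
  fun_prop (disch := simpa using this)

theorem circleAverage_pow_mul_sq_sub_one_div (hq : 1 < q) (m : ℕ) :
    circleAverage (fun z => z ^ m * (z ^ 2 - 1) / (2 * Complex.I * (q - z ^ 2))) 0 1 =
      if m = 0 then (Complex.I / (2 * q) : ℂ) else 0 := by
  have hq0 : (q : ℂ) ≠ 0 := by exact_mod_cast (by linarith : q ≠ 0)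
  rw [DiffContOnCl.circleAverage (by simpa using diffContOnCl_pow_mul_sq_sub_one_div hq m)]
  obtain rfl | hm := eq_or_ne m 0
  · rw [if_pos rfl, div_eq_div_iff (by simp [hq0]) (by simp [hq0])]
    linear_combination (-2 * q : ℂ) * Complex.I_sq
  · simp [hm]

theorem circleMap_pow_mul_sq_sub_one_div (hq : 1 < q) (m : ℕ) (θ : ℝ) :
    circleMap 0 1 θ ^ m * (circleMap 0 1 θ ^ 2 - 1) /
        (2 * Complex.I * (q - circleMap 0 1 θ ^ 2)) =
      (sin θ / ((q + 1) ^ 2 - 4 * q * cos θ ^ 2) : ℝ) *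
        (q * Complex.exp (((m + 1) * θ : ℝ) * Complex.I) -
          Complex.exp (((m - 1) * θ : ℝ) * Complex.I)) := by
  set z := Complex.exp (θ * Complex.I) with hz
  have hz0 : z ≠ 0 := Complex.exp_ne_zero _
  have norm_z : ‖z‖ = 1 := Complex.norm_exp_ofReal_mul_I θ
  have hqz : (q : ℂ) - z ^ 2 ≠ 0 := ofReal_sub_sq_ne_zero hq norm_z.le
  have hqz' : (q : ℂ) - (z⁻¹) ^ 2 ≠ 0 := ofReal_sub_sq_ne_zero hq (by simp [norm_z])
  have circleMap_eq : circleMap 0 1 θ = z := by simp [circleMap, hz]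
  have exp_add_one : Complex.exp (((m + 1) * θ : ℝ) * Complex.I) = z ^ (m + 1) := by
    rw [hz, ← Complex.exp_nat_mul]
    push_cast
    ring_nf
  have exp_sub_one : Complex.exp (((m - 1) * θ : ℝ) * Complex.I) = z ^ (m + 1) * (z⁻¹) ^ 2 := by
    rw [hz, ← Complex.exp_neg, ← Complex.exp_nat_mul, ← Complex.exp_nat_mul, ← Complex.exp_add]
    push_cast
    ring_nf
  have sin_eq : Complex.sin θ = (z - z⁻¹) / (2 * Complex.I) := by
    rw [hz, ← Complex.exp_neg, Complex.sin, neg_mul]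
    field_simp
    rw [Complex.I_sq]
    ring
  have denom_eq : ((q : ℂ) + 1) ^ 2 - 4 * q * Complex.cos θ ^ 2 =
      (q - z ^ 2) * (q - (z⁻¹) ^ 2) := by
    rw [Complex.cos, neg_mul, Complex.exp_neg, ← hz]
    field_simp
    ring
  rw [circleMap_eq, exp_add_one, exp_sub_one, mul_comm (q : ℂ), ← mul_sub]
  push_cast
  rw [sin_eq, denom_eq]
  generalize (q : ℂ) - (z⁻¹) ^ 2 = w at hqz'
  field_simp
  ring

theorem integral_sin_mul_sin_div (hq : 1 < q) (m : ℕ) :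
    ∫ θ in 0..2 * π, sin θ / ((q + 1) ^ 2 - 4 * q * cos θ ^ 2) *
      (q * sin ((m + 1) * θ) - sin ((m - 1) * θ)) = if m = 0 then π / q else 0 := by
  have hf := diffContOnCl_pow_mul_sq_sub_one_div hq m
  have circleIntegrable : CircleIntegrable
      (fun z => z ^ m * (z ^ 2 - 1) / (2 * Complex.I * (q - z ^ 2))) 0 1 := by
    refine ContinuousOn.circleIntegrable zero_le_one (hf.continuousOn.mono ?_)
    rw [closure_ball _ one_ne_zero]
    exact Metric.sphere_subset_closedBall
  have im_circleAverage := Complex.imCLM.circleAverage_comp_comm circleIntegrable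
  rw [circleAverage_pow_mul_sq_sub_one_div hq, circleAverage] at im_circleAverage
  simp only [Function.comp_apply, circleMap_pow_mul_sq_sub_one_div hq, Complex.imCLM_apply,
    Complex.im_ofReal_mul, Complex.sub_im, Complex.exp_ofReal_mul_I_im, smul_eq_mul]
    at im_circleAverage
  rw [inv_mul_eq_iff_eq_mul₀ two_pi_pos.ne'] at im_circleAverage
  rw [im_circleAverage]
  split_ifs
  · have im_eq : (Complex.I / (2 * q) : ℂ).im = 1 / (2 * q) := by
      rw [← Complex.ofReal_ofNat, ← Complex.ofReal_mul, Complex.div_ofReal_im, Complex.I_im]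
    rw [im_eq]
    field_simp
  · simp

theorem add_one_sq_sub_cos_sq_pos (hq : 1 < q) (θ : ℝ) : 0 < (q + 1) ^ 2 - 4 * q * cos θ ^ 2 := by
  nlinarith [cos_sq_add_sin_sq θ, sq_nonneg (sin θ), sq_pos_of_pos (sub_pos.2 hq)]

theorem integral_zero_pi_comp_cos_mul_sin_sq_div (hq : 1 < q) {f : ℝ → ℝ} (hf : Continuous f) :
    ∫ θ in 0..π, f (cos θ) * (sin θ ^ 2 / ((q + 1) ^ 2 - 4 * q * cos θ ^ 2)) =
      (∫ θ in 0..2 * π, f (cos θ) * (sin θ ^ 2 / ((q + 1) ^ 2 - 4 * q * cos θ ^ 2))) / 2 := by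
  have hcont : Continuous fun θ => f (cos θ) * ((1 - cos θ ^ 2) /
      ((q + 1) ^ 2 - 4 * q * cos θ ^ 2)) :=
    (hf.comp continuous_cos).mul
      (Continuous.div₀ (by fun_prop) (by fun_prop) fun θ => (add_one_sq_sub_cos_sq_pos hq θ).ne')
  have h := integral_comp_cos_zero_two_pi
    (F := fun c => f c * ((1 - c ^ 2) / ((q + 1) ^ 2 - 4 * q * c ^ 2))) hcont
  simp only [← sin_sq] at h
  rw [h, mul_div_cancel_left₀ _ two_ne_zero]

theorem integral_zero_pi_sin_sq_div (hq : 1 < q) :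
    ∫ θ in 0..π, sin θ ^ 2 / ((q + 1) ^ 2 - 4 * q * cos θ ^ 2) = π / (2 * q * (q + 1)) := by
  have half := integral_zero_pi_comp_cos_mul_sin_sq_div hq (continuous_const (y := (1 : ℝ)))
  simp only [one_mul] at half
  have h := integral_sin_mul_sin_div hq 0
  have integrand_eq (θ : ℝ) : sin θ / ((q + 1) ^ 2 - 4 * q * cos θ ^ 2) *
      (q * sin (((0 : ℕ) + 1) * θ) - sin (((0 : ℕ) - 1) * θ)) =
      (q + 1) * (sin θ ^ 2 / ((q + 1) ^ 2 - 4 * q * cos θ ^ 2)) := by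
    rw [Nat.cast_zero, zero_add, one_mul, zero_sub, neg_one_mul, sin_neg]
    ring
  simp only [integrand_eq, intervalIntegral.integral_const_mul, if_true] at h
  rw [half]
  have hq0 : q ≠ 0 := by positivity
  have hq1 : q + 1 ≠ 0 := by positivity
  field_simp at h ⊢
  linarith

end MeanValue

theorem sq_mul_eval_geronimus (r x : ℝ) (m : ℕ) :
    r ^ 2 * (geronimus (r ^ 2) (m + 1)).eval (2 * r * x) =
      r ^ (m + 1) * (r ^ 2 * (Chebyshev.U ℝ (m + 1)).eval x - (Chebyshev.U ℝ (m - 1)).eval x) := by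
  induction m using Nat.strong_induction_on with
  | _ m ih =>
    match m with
    | 0 =>
      simp only [geronimus, eval_X, Nat.cast_zero, zero_add, zero_sub, Chebyshev.U_one,
        Chebyshev.U_neg_one, eval_mul, eval_ofNat, eval_zero]
      ring
    | 1 =>
      simp only [geronimus, Nat.cast_one, one_add_one_eq_two, sub_self, Chebyshev.U_two,
        Chebyshev.U_zero, eval_sub, eval_mul, eval_pow, eval_ofNat, eval_one, eval_X, eval_C]
      ring
    | m + 2 =>
      have eval_U {i j k : ℤ} (hj : j = i + 1) (hk : k = i + 2) : (Chebyshev.U ℝ k).eval x =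
          2 * x * (Chebyshev.U ℝ j).eval x - (Chebyshev.U ℝ i).eval x := by
        simp [hj, hk, Chebyshev.U_add_two]
      have h₀ := ih m (by omega)
      have h₁ := ih (m + 1) (by omega)
      push_cast at h₁ ⊢
      have hU := eval_U (i := m + 1) (j := m + 1 + 1) (k := m + 2 + 1) (by ring) (by ring)
      have hU' := eval_U (i := m - 1) (j := m + 1 - 1) (k := m + 2 - 1) (by ring) (by ring)
      rw [geronimus, hU, hU']
      simp only [eval_sub, eval_mul, eval_X, eval_C]
      linear_combination 2 * r * x * h₁ - r ^ 2 * h₀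

theorem integral_zero_pi_eval_geronimus_mul_sin_sq_div {r : ℝ} (hr : 1 < r) (m : ℕ) :
    ∫ θ in 0..π, (geronimus (r ^ 2) (m + 1)).eval (2 * r * cos θ) *
      (sin θ ^ 2 / ((r ^ 2 + 1) ^ 2 - 4 * r ^ 2 * cos θ ^ 2)) = 0 := by
  have hq : 1 < r ^ 2 := one_lt_pow₀ hr two_ne_zero
  have hr0 : r ≠ 0 := by positivity
  have integrand_eq (θ : ℝ) : (geronimus (r ^ 2) (m + 1)).eval (2 * r * cos θ) *
      (sin θ ^ 2 / ((r ^ 2 + 1) ^ 2 - 4 * r ^ 2 * cos θ ^ 2)) =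
      r ^ (m + 1) / r ^ 2 * (sin θ / ((r ^ 2 + 1) ^ 2 - 4 * r ^ 2 * cos θ ^ 2) *
        (r ^ 2 * sin (((m + 1 : ℕ) + 1) * θ) - sin (((m + 1 : ℕ) - 1) * θ))) := by
    have h := sq_mul_eval_geronimus r (cos θ) m
    rw [mul_comm, ← eq_div_iff (pow_ne_zero 2 hr0)] at h
    have sin_succ := Chebyshev.U_real_cos θ (m + 1)
    have sin_pred := Chebyshev.U_real_cos θ (m - 1)
    push_cast at sin_succ sin_pred ⊢
    rw [sub_add_cancel] at sin_pred
    rw [add_sub_cancel_right, ← sin_succ, ← sin_pred, h]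
    ring
  rw [integral_zero_pi_comp_cos_mul_sin_sq_div hq
    (f := fun x => (geronimus (r ^ 2) (m + 1)).eval (2 * r * x)) (by fun_prop)]
  simp only [integrand_eq, intervalIntegral.integral_const_mul, integral_sin_mul_sin_div hq]
  simp

end KestenMcKay

section KestenMcKayMeasure

open Real Polynomial

variable {d : ℕ}

-- Outside the support the radicand is negative, so the square root takes the junk value `0`.
theorem kmDensity_eq (d : ℕ) (x : ℝ) : kmDensity d x =
    2 * d * √(4 * (2 * d - 1) - x ^ 2) / (2 * π * ((2 * d) ^ 2 - x ^ 2)) := by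
  rw [kmDensity, ite_eq_left_iff]
  intro h
  rw [sqrt_eq_zero_of_nonpos (by linarith), mul_zero, zero_div]

theorem measurable_kmDensity (d : ℕ) : Measurable (kmDensity d) := by
  simp only [funext (kmDensity_eq d)]
  fun_prop

theorem kmDensity_of_lt_sq {x : ℝ} (hx : 4 * (2 * d - 1) < x ^ 2) : kmDensity d x = 0 :=
  if_neg hx.not_ge

theorem kmDensity_nonneg (d : ℕ) (x : ℝ) : 0 ≤ kmDensity d x := by
  obtain hx | hx := lt_or_ge (4 * (2 * d - 1) : ℝ) (x ^ 2)
  · rw [kmDensity_of_lt_sq hx]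
  · have denom_nonneg : 0 ≤ (2 * d) ^ 2 - x ^ 2 := by nlinarith [sq_nonneg (d - 1 : ℝ)]
    rw [kmDensity_eq]
    positivity

theorem kmDensity_le_sq (hd : 2 ≤ d) (x : ℝ) : kmDensity d x ≤ d ^ 2 := by
  have hd' : (2 : ℝ) ≤ d := by exact_mod_cast hd
  obtain hx | hx := lt_or_ge (4 * (2 * d - 1) : ℝ) (x ^ 2)
  · rw [kmDensity_of_lt_sq hx]
    positivity
  · have denom_ge : 4 ≤ (2 * d) ^ 2 - x ^ 2 := by nlinarith
    have sqrt_le : √(4 * (2 * d - 1) - x ^ 2) ≤ 2 * d := by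
      rw [sqrt_le_left (by positivity)]
      nlinarith
    have four_le : 4 ≤ 2 * π * ((2 * d) ^ 2 - x ^ 2) := by nlinarith [pi_gt_three]
    rw [kmDensity_eq, div_le_iff₀ (by linarith)]
    calc 2 * d * √(4 * (2 * d - 1) - x ^ 2) ≤ 2 * d * (2 * d) := by gcongr
      _ = d ^ 2 * 4 := by ring
      _ ≤ d ^ 2 * (2 * π * ((2 * d) ^ 2 - x ^ 2)) := by gcongr

theorem kmDensity_two_mul_mul {r : ℝ} (hr : 0 < r) (hrd : r ^ 2 = 2 * d - 1) (y : ℝ) :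
    2 * r * kmDensity d (2 * r * y) = 2 * r ^ 2 * (r ^ 2 + 1) / π *
      ((1 - y ^ 2) / ((r ^ 2 + 1) ^ 2 - 4 * r ^ 2 * y ^ 2)) * √(1 - y ^ 2)⁻¹ := by
  have sqrt_eq : √(4 * r ^ 2 - (2 * r * y) ^ 2) = 2 * r * √(1 - y ^ 2) := by
    rw [show 4 * r ^ 2 - (2 * r * y) ^ 2 = (2 * r) ^ 2 * (1 - y ^ 2) by ring,
      sqrt_mul (sq_nonneg _), sqrt_sq (by positivity)]
  have hd : 2 * (d : ℝ) = r ^ 2 + 1 := by linarith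
  have sqrt_one_sub : √(1 - y ^ 2) = (1 - y ^ 2) * √(1 - y ^ 2)⁻¹ := by
    rw [sqrt_inv, ← div_eq_mul_inv, div_sqrt]
  rw [kmDensity_eq, ← hrd, sqrt_eq, sqrt_one_sub, hd,
    show (2 * r * y) ^ 2 = 4 * r ^ 2 * y ^ 2 by ring]
  generalize (r ^ 2 + 1) ^ 2 - 4 * r ^ 2 * y ^ 2 = e
  ring

theorem integral_kmDensity_mul {r : ℝ} (hr : 0 < r) (hrd : r ^ 2 = 2 * d - 1) (f : ℝ → ℝ) :
    ∫ x, kmDensity d x * f x = 2 * r ^ 2 * (r ^ 2 + 1) / π *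
      ∫ θ in 0..π, f (2 * r * cos θ) *
        (sin θ ^ 2 / ((r ^ 2 + 1) ^ 2 - 4 * r ^ 2 * cos θ ^ 2)) := by
  set h : ℝ → ℝ := fun y => f (2 * r * y) * ((1 - y ^ 2) / ((r ^ 2 + 1) ^ 2 - 4 * r ^ 2 * y ^ 2))
  have rescale := Measure.integral_comp_mul_left (fun x => kmDensity d x * f x) (2 * r)
  rw [abs_of_pos (by positivity), smul_eq_mul, eq_inv_mul_iff_mul_eq₀ (by positivity)] at rescale
  have support_subset : Function.support
      (fun y => 2 * r ^ 2 * (r ^ 2 + 1) / π * (h y * √(1 - y ^ 2)⁻¹)) ⊆ Set.Ioc (-1) 1 := by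
    refine Function.support_subset_iff'.2 fun y hy => ?_
    have : (1 - y ^ 2)⁻¹ ≤ 0 := inv_nonpos.2 (by
      by_contra! hlt
      exact hy ⟨by nlinarith, by nlinarith⟩)
    simp only [sqrt_eq_zero_of_nonpos this, mul_zero]
  have integrand_eq (y : ℝ) : 2 * r * (kmDensity d (2 * r * y) * f (2 * r * y)) =
      2 * r ^ 2 * (r ^ 2 + 1) / π * (h y * √(1 - y ^ 2)⁻¹) := by
    rw [← mul_assoc, kmDensity_two_mul_mul hr hrd]
    ring
  simp only [← rescale, ← integral_const_mul, integrand_eq]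
  rw [← intervalIntegral.integral_eq_integral_of_support_subset support_subset,
    intervalIntegral.integral_const_mul, ← Chebyshev.integral_measureT h,
    Chebyshev.integral_measureT_eq_integral_cos]
  simp only [h, sin_sq]

theorem exists_one_lt_sq_eq (hd : 2 ≤ d) : ∃ r : ℝ, 1 < r ∧ r ^ 2 = 2 * d - 1 := by
  have hd' : (2 : ℝ) ≤ d := by exact_mod_cast hd
  exact ⟨√(2 * d - 1), lt_sqrt_of_sq_lt (by linarith), sq_sqrt (by linarith)⟩

theorem integral_kmDensity (hd : 2 ≤ d) : ∫ x, kmDensity d x = 1 := by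
  obtain ⟨r, hr, hrd⟩ := exists_one_lt_sq_eq hd
  have h := integral_kmDensity_mul (by positivity) hrd fun _ => 1
  simp only [mul_one, one_mul, integral_zero_pi_sin_sq_div (one_lt_pow₀ hr two_ne_zero)] at h
  rw [h]
  have := pi_ne_zero
  field_simp

theorem isProbabilityMeasure_kestenMcKay (hd : 2 ≤ d) :
    IsProbabilityMeasure (kestenMcKay d) := by
  refine ⟨?_⟩
  rw [kestenMcKay, withDensity_apply _ MeasurableSet.univ, Measure.restrict_univ,
    ← ofReal_integral_eq_lintegral_ofReal (integrable_of_integral_eq_one (integral_kmDensity hd))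
      (Filter.Eventually.of_forall (kmDensity_nonneg d)),
    integral_kmDensity hd, ENNReal.ofReal_one]

theorem kestenMcKay_compl_Icc (d : ℕ) : kestenMcKay d (Set.Icc (-(2 * d : ℝ)) (2 * d))ᶜ = 0 := by
  rw [kestenMcKay, withDensity_apply _ measurableSet_Icc.compl]
  refine setLIntegral_eq_zero measurableSet_Icc.compl fun x hx => ?_
  have hx' : (2 * d : ℝ) < |x| := lt_of_not_ge fun h => hx (abs_le.1 h)
  have hlt : 4 * (2 * d - 1) < x ^ 2 := by
    rw [← sq_abs]
    nlinarith [sq_nonneg (d - 1 : ℝ)]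
  simp [kmDensity_of_lt_sq hlt]

theorem real_kestenMcKay_Icc_le (hd : 2 ≤ d) {x y : ℝ} (hxy : x ≤ y) :
    (kestenMcKay d).real (Set.Icc x y) ≤ d ^ 2 * (y - x) := by
  refine ENNReal.toReal_le_of_le_ofReal (mul_nonneg (by positivity) (sub_nonneg.2 hxy)) ?_
  calc kestenMcKay d (Set.Icc x y)
      = ∫⁻ a in Set.Icc x y, ENNReal.ofReal (kmDensity d a) :=
        withDensity_apply _ measurableSet_Icc
    _ ≤ ∫⁻ _ in Set.Icc x y, ENNReal.ofReal (d ^ 2) :=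
        lintegral_mono fun a => ENNReal.ofReal_le_ofReal (kmDensity_le_sq hd a)
    _ = ENNReal.ofReal (d ^ 2 * (y - x)) := by
        rw [setLIntegral_const, volume_Icc, ENNReal.ofReal_mul (by positivity)]

theorem integral_geronimus_kestenMcKay (hd : 2 ≤ d) (m : ℕ) :
    ∫ x, (geronimus (2 * d - 1 : ℝ) (m + 1)).eval x ∂kestenMcKay d = 0 := by
  obtain ⟨r, hr, hrd⟩ := exists_one_lt_sq_eq hd
  rw [kestenMcKay, integral_withDensity_eq_integral_toReal_smul
    (measurable_kmDensity d).ennreal_ofReal (by simp)]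
  simp only [ENNReal.toReal_ofReal (kmDensity_nonneg d _), smul_eq_mul]
  rw [integral_kmDensity_mul (by positivity) hrd, ← hrd,
    integral_zero_pi_eval_geronimus_mul_sin_sq_div hr, mul_zero]

end KestenMcKayMeasure

section DirichletKernel

open Real Polynomial

/-- The polynomial `D` of degree `2k` such that `D (sin φ) * sin φ = sin ((2k + 1) φ)`, that is, the
Dirichlet kernel of order `k` in the variable `sin φ`. Its square serves as a polynomial
approximate identity on `[-1, 1]`. -/
noncomputable def dirichletPolynomial : ℕ → ℝ[X]
  | 0 => 1
  | 1 => 3 - 4 * X ^ 2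
  | k + 2 => (2 - 4 * X ^ 2) * dirichletPolynomial (k + 1) - dirichletPolynomial k

theorem eval_sin_dirichletPolynomial_mul_sin (φ : ℝ) (k : ℕ) :
    (dirichletPolynomial k).eval (sin φ) * sin φ = sin ((2 * k + 1) * φ) := by
  induction k using Nat.strong_induction_on with
  | _ k ih =>
    match k with
    | 0 => simp [dirichletPolynomial]
    | 1 =>
      rw [Nat.cast_one, show (2 * 1 + 1 : ℝ) = 3 by norm_num, sin_three_mul]
      simp only [dirichletPolynomial, eval_sub, eval_mul, eval_pow, eval_X, eval_ofNat]
      ring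
    | k + 2 =>
      have sin_add_sin : sin ((2 * (k + 2 : ℕ) + 1) * φ) + sin ((2 * k + 1) * φ) =
          2 * cos (2 * φ) * sin ((2 * (k + 1 : ℕ) + 1) * φ) := by
        have h := sin_add_sin ((2 * (k + 2 : ℕ) + 1) * φ) ((2 * k + 1) * φ)
        push_cast at h ⊢
        rw [h]
        ring_nf
      rw [cos_two_mul, cos_sq', ← ih (k + 1) (by omega), ← ih k (by omega)] at sin_add_sin
      simp only [dirichletPolynomial, eval_sub, eval_mul, eval_pow, eval_X, eval_ofNat]
      linear_combination -sin_add_sin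

theorem eval_neg_dirichletPolynomial (k : ℕ) (s : ℝ) :
    (dirichletPolynomial k).eval (-s) = (dirichletPolynomial k).eval s := by
  induction k using Nat.strong_induction_on with
  | _ k ih =>
    match k with
    | 0 => simp [dirichletPolynomial]
    | 1 => simp [dirichletPolynomial]
    | k + 2 => simp [dirichletPolynomial, ih (k + 1) (by omega), ih k (by omega)]

theorem eval_dirichletPolynomial_sq_le (k : ℕ) {s : ℝ} (hs₀ : 0 < s) (hs₁ : s ≤ 1) :
    (dirichletPolynomial k).eval s ^ 2 ≤ s ^ (-2 : ℤ) := by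
  have h := eval_sin_dirichletPolynomial_mul_sin (arcsin s) k
  rw [sin_arcsin (by linarith) hs₁] at h
  rw [zpow_neg, ← one_div, le_div_iff₀ (by positivity)]
  calc (dirichletPolynomial k).eval s ^ 2 * s ^ 2 = sin ((2 * k + 1) * arcsin s) ^ 2 := by
        rw [← h, mul_pow]
    _ ≤ 1 := sin_sq_le_one _

theorem half_le_eval_dirichletPolynomial (k : ℕ) {s : ℝ} (hs₀ : 0 < s)
    (hs : s ≤ 1 / (2 * k + 1)) : (2 * k + 1) / 2 ≤ (dirichletPolynomial k).eval s := by
  have hs₁ : s ≤ 1 := hs.trans (div_le_self zero_le_one (by norm_num))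
  have h := eval_sin_dirichletPolynomial_mul_sin (arcsin s) k
  rw [le_div_iff₀ (by positivity)] at hs
  set φ := arcsin s
  have sin_φ : sin φ = s := sin_arcsin (by linarith) hs₁
  have φ_nonneg : 0 ≤ φ := arcsin_nonneg.2 hs₀.le
  have s_le : s ≤ φ := sin_φ ▸ sin_le φ_nonneg
  have φ_le : φ ≤ π / 2 * s := by
    have jordan := mul_le_sin φ_nonneg (arcsin_le_pi_div_two s)
    rw [sin_φ, div_mul_eq_mul_div, div_le_iff₀ pi_pos] at jordan
    linarith
  have mul_φ_le : (2 * k + 1) * φ ≤ π / 2 :=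
    calc (2 * k + 1) * φ ≤ (2 * k + 1) * (π / 2 * s) := by gcongr
      _ = π / 2 * (s * (2 * k + 1)) := by ring
      _ ≤ π / 2 * 1 := by gcongr
      _ = π / 2 := mul_one _
  rw [sin_φ] at h
  refine le_of_mul_le_mul_right ?_ hs₀
  calc (2 * k + 1) / 2 * s ≤ (2 * k + 1) / 2 * φ := by gcongr
    _ = 2 / 4 * ((2 * k + 1) * φ) := by ring
    _ ≤ 2 / π * ((2 * k + 1) * φ) := by gcongr; exact pi_le_four
    _ ≤ sin ((2 * k + 1) * φ) := mul_le_sin (by positivity) mul_φ_le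
    _ = (dirichletPolynomial k).eval s * s := h.symm

theorem le_integral_dirichletPolynomial_sq (k : ℕ) :
    (2 * k + 1) / 4 ≤ ∫ s in (-1 : ℝ)..1, (dirichletPolynomial k).eval s ^ 2 := by
  have hcont : Continuous fun s => (dirichletPolynomial k).eval s ^ 2 := by fun_prop
  calc (2 * k + 1 : ℝ) / 4 = ∫ _ in (0 : ℝ)..(1 / (2 * k + 1)), ((2 * k + 1 : ℝ) / 2) ^ 2 := by
        rw [intervalIntegral.integral_const, sub_zero, smul_eq_mul]
        field_simp
        norm_num
    _ ≤ ∫ s in (0 : ℝ)..(1 / (2 * k + 1)), (dirichletPolynomial k).eval s ^ 2 := by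
        refine intervalIntegral.integral_mono_on_of_le_Ioo (by positivity) (by simp)
          (hcont.intervalIntegrable _ _) fun s hs => ?_
        gcongr
        exact half_le_eval_dirichletPolynomial k hs.1 hs.2.le
    _ ≤ ∫ s in (-1 : ℝ)..1, (dirichletPolynomial k).eval s ^ 2 :=
        intervalIntegral.integral_mono_interval (by norm_num) (by positivity)
          (div_le_self zero_le_one (by norm_num)) (.of_forall fun s => sq_nonneg _)
          (hcont.intervalIntegrable _ _)

theorem integral_dirichletPolynomial_sq_tails_le (k : ℕ) {h : ℝ} (hh₀ : 0 < h) (hh₁ : h ≤ 1) :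
    (∫ s in (-1)..(-h), (dirichletPolynomial k).eval s ^ 2) +
      (∫ s in h..1, (dirichletPolynomial k).eval s ^ 2) ≤ 2 / h := by
  have zero_notMem : (0 : ℝ) ∉ Set.uIcc h 1 := by simp [hh₀.not_ge, Set.mem_uIcc]
  have reflect : ∫ s in (-1)..(-h), (dirichletPolynomial k).eval s ^ 2 =
      ∫ s in h..1, (dirichletPolynomial k).eval s ^ 2 := by
    rw [← intervalIntegral.integral_comp_neg]
    simp only [eval_neg_dirichletPolynomial]
  have right_tail : ∫ s in h..1, (dirichletPolynomial k).eval s ^ 2 ≤ 1 / h :=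
    calc ∫ s in h..1, (dirichletPolynomial k).eval s ^ 2 ≤ ∫ s in h..1, s ^ (-2 : ℤ) :=
          intervalIntegral.integral_mono_on hh₁
            (Continuous.intervalIntegrable (by fun_prop) _ _)
            (intervalIntegral.intervalIntegrable_zpow (Or.inr zero_notMem)) fun s hs =>
              eval_dirichletPolynomial_sq_le k (hh₀.trans_le hs.1) hs.2
      _ = 1 / h - 1 := by
          rw [integral_zpow (Or.inr ⟨by norm_num, zero_notMem⟩)]
          norm_num
          ring
      _ ≤ 1 / h := sub_le_self _ zero_le_one
  rw [reflect, ← two_mul, ← mul_one_div]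
  gcongr

section LinearFunctional

variable {Λ : ℝ[X] →ₗ[ℝ] ℝ} {δ : ℝ} {N : ℕ}

theorem abs_map_X_pow_mul_dirichletPolynomial_le (hΛ : ∀ j ≤ N, |Λ (X ^ j)| ≤ δ) (k : ℕ) :
    ∀ i, i + 2 * k ≤ N → |Λ (X ^ i * dirichletPolynomial k)| ≤ 7 ^ k * δ := by
  have hδ : 0 ≤ δ := (abs_nonneg _).trans (hΛ 0 (Nat.zero_le N))
  induction k using Nat.strong_induction_on with
  | _ k ih =>
    match k with
    | 0 =>
      intro i hi
      simpa [dirichletPolynomial] using hΛ i hi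
    | 1 =>
      intro i hi
      have expand : X ^ i * dirichletPolynomial 1 = (3 : ℝ) • X ^ i - (4 : ℝ) • X ^ (i + 2) := by
        simp only [dirichletPolynomial, smul_eq_C_mul, map_ofNat]
        ring
      have h₀ := abs_le.1 (hΛ i (by omega))
      have h₂ := abs_le.1 (hΛ (i + 2) (by omega))
      rw [expand, map_sub, map_smul, map_smul, smul_eq_mul, smul_eq_mul, abs_le]
      constructor <;> linarith
    | k + 2 =>
      intro i hi
      have expand : X ^ i * dirichletPolynomial (k + 2) =
          (2 : ℝ) • (X ^ i * dirichletPolynomial (k + 1)) -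
            (4 : ℝ) • (X ^ (i + 2) * dirichletPolynomial (k + 1)) -
            X ^ i * dirichletPolynomial k := by
        simp only [dirichletPolynomial, smul_eq_C_mul, map_ofNat]
        ring
      have h₀ := abs_le.1 (ih k (by omega) i (by omega))
      have h₁ := abs_le.1 (ih (k + 1) (by omega) i (by omega))
      have h₂ := abs_le.1 (ih (k + 1) (by omega) (i + 2) (by omega))
      have : 0 ≤ 7 ^ k * δ := by positivity
      rw [expand, map_sub, map_sub, map_smul, map_smul, smul_eq_mul, smul_eq_mul, abs_le]
      rw [pow_succ] at h₁ h₂ ⊢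
      rw [pow_succ]
      constructor <;> linarith

theorem abs_map_dirichletPolynomial_sq_le {k : ℕ} (hΛ : ∀ j ≤ 4 * k, |Λ (X ^ j)| ≤ δ) :
    |Λ (dirichletPolynomial k ^ 2)| ≤ 49 ^ k * δ := by
  have h := abs_map_X_pow_mul_dirichletPolynomial_le (N := 2 * k) (δ := 7 ^ k * δ)
    (Λ := Λ ∘ₗ LinearMap.mulRight ℝ (dirichletPolynomial k))
    (fun j hj => abs_map_X_pow_mul_dirichletPolynomial_le hΛ k j (by omega)) k 0 (by omega)
  calc |Λ (dirichletPolynomial k ^ 2)| ≤ 7 ^ k * (7 ^ k * δ) := by simpa [sq] using h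
    _ = 49 ^ k * δ := by rw [← mul_assoc, ← mul_pow]; norm_num

end LinearFunctional

end DirichletKernel

section KernelSmoothing

open Polynomial

theorem le_add_half_of_integral_mul_le {J g : ℝ → ℝ} {h w D ε Z : ℝ} (hJ : Continuous J)
    (hJ₀ : ∀ s, 0 ≤ J s) (hh₀ : 0 ≤ h) (hh₁ : h ≤ 1)
    (hg : ∀ u v, IntervalIntegrable (fun s => J s * g s) volume u v)
    (hw : ∀ s ∈ Set.Icc (-h) h, w ≤ g s) (hD : ∀ s, |g s| ≤ D)
    (hZ : Z = ∫ s in (-1)..1, J s) (hZ₀ : 0 < Z)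
    (tails_le : 4 * ((∫ s in (-1)..(-h), J s) + ∫ s in h..1, J s) ≤ Z)
    (hε : ∫ s in (-1)..1, J s * g s ≤ ε) : w ≤ ε / Z + D / 2 := by
  have hJi (u v) : IntervalIntegrable J volume u v := hJ.intervalIntegrable u v
  have le_integral {c u v : ℝ} (huv : u ≤ v) (hc : ∀ s ∈ Set.Icc u v, c ≤ g s) :
      c * ∫ s in u..v, J s ≤ ∫ s in u..v, J s * g s := by
    rw [mul_comm, ← intervalIntegral.integral_mul_const]
    exact intervalIntegral.integral_mono_on huv ((hJi u v).mul_const _) (hg u v) fun s hs =>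
      mul_le_mul_of_nonneg_left (hc s hs) (hJ₀ s)
  have split {f : ℝ → ℝ} (hf : ∀ u v, IntervalIntegrable f volume u v) :
      ∫ s in (-1)..1, f s =
        (∫ s in (-1)..(-h), f s) + (∫ s in (-h)..h, f s) + ∫ s in h..1, f s := by
    rw [intervalIntegral.integral_add_adjacent_intervals (hf _ _) (hf _ _),
      intervalIntegral.integral_add_adjacent_intervals (hf _ _) (hf _ _)]
  have neg_le (s) : -D ≤ g s := (abs_le.1 (hD s)).1
  have left := le_integral (neg_le_neg hh₁) fun s _ => neg_le s
  have middle := le_integral (neg_le_self hh₀) hw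
  have right := le_integral hh₁ fun s _ => neg_le s
  rw [split hg] at hε
  rw [split hJi] at hZ
  have w_le : w ≤ D := (hw 0 ⟨by linarith, hh₀⟩).trans ((le_abs_self _).trans (hD 0))
  have D_nonneg : 0 ≤ D := (abs_nonneg _).trans (hD 0)
  have tails_nonneg : 0 ≤ (∫ s in (-1)..(-h), J s) + ∫ s in h..1, J s :=
    add_nonneg (intervalIntegral.integral_nonneg (by linarith) fun s _ => hJ₀ s)
      (intervalIntegral.integral_nonneg hh₁ fun s _ => hJ₀ s)
  rw [← sub_le_iff_le_add, le_div_iff₀ hZ₀]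
  nlinarith [mul_le_mul_of_nonneg_right w_le tails_nonneg,
    mul_le_mul_of_nonneg_left tails_le D_nonneg]

theorem le_add_half_of_integral_dirichletPolynomial_sq_mul_le {g : ℝ → ℝ} {w D ε : ℝ} {k : ℕ}
    (hk : 32 ≤ 2 * k + 1) (hg : ∀ u v, IntervalIntegrable g volume u v)
    (hw : ∀ s : ℝ, |s| ≤ 32 / (2 * k + 1) → w ≤ g s) (hD : ∀ s, |g s| ≤ D) (hε₀ : 0 ≤ ε)
    (hε : ∫ s in (-1)..1, (dirichletPolynomial k).eval s ^ 2 * g s ≤ ε) :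
    w ≤ 4 * ε / (2 * k + 1) + D / 2 := by
  have hk' : (32 : ℝ) ≤ 2 * k + 1 := by exact_mod_cast hk
  have h_pos : (0 : ℝ) < 32 / (2 * k + 1) := by positivity
  have h_le : (32 / (2 * k + 1) : ℝ) ≤ 1 := div_le_one_of_le₀ hk' (by positivity)
  have mass := le_integral_dirichletPolynomial_sq k
  have tails := integral_dirichletPolynomial_sq_tails_le k h_pos h_le
  have hcont : Continuous fun s => (dirichletPolynomial k).eval s ^ 2 := by fun_prop
  have div_mass_le : ε / ∫ s in (-1)..1, (dirichletPolynomial k).eval s ^ 2 ≤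
      4 * ε / (2 * k + 1) := by
    rw [mul_comm, ← div_div_eq_mul_div]
    gcongr
  refine (le_add_half_of_integral_mul_le hcont (fun s => sq_nonneg _) h_pos.le h_le
    (fun u v => (hg u v).continuousOn_mul hcont.continuousOn) (fun s hs => hw s (abs_le.2 hs)) hD
    rfl (lt_of_lt_of_le (by positivity) mass) ?_ hε).trans ?_
  · rw [div_div_eq_mul_div] at tails
    linarith
  · linarith

theorem abs_sub_le_add_half_of_integral_dirichletPolynomial_sq_mul_le {F G : ℝ → ℝ}
    {x R L D ε : ℝ} {k : ℕ} (hF : Monotone F) (hG : Monotone G)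
    (hL : ∀ ⦃x y⦄, x ≤ y → G y - G x ≤ L * (y - x)) (hL₀ : 0 ≤ L) (hR : 0 ≤ R)
    (hk : 32 ≤ 2 * k + 1) (hD : ∀ y, |F y - G y| ≤ D)
    (hε : ∀ a, |a - x| ≤ R * (32 / (2 * k + 1)) →
      |∫ s in (-1)..1, (dirichletPolynomial k).eval s ^ 2 * (F (a + R * s) - G (a + R * s))| ≤ ε) :
    |F x - G x| ≤ 64 * R * L / (2 * k + 1) + 4 * ε / (2 * k + 1) + D / 2 := by
  set h : ℝ := 32 / (2 * k + 1)
  have h_nonneg : 0 ≤ R * h := by positivity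
  have hε₀ : 0 ≤ ε := (abs_nonneg _).trans (hε x (by simpa using h_nonneg))
  have const_eq : 64 * R * L / (2 * k + 1) = L * (2 * (R * h)) := by ring
  have comp_affine {f : ℝ → ℝ} (hf : Monotone f) (a : ℝ) : Monotone fun s => f (a + R * s) :=
    fun s t hst => hf (by gcongr)
  have hint (a u v : ℝ) :
      IntervalIntegrable (fun s => F (a + R * s) - G (a + R * s)) volume u v :=
    (comp_affine hF a).intervalIntegrable.sub (comp_affine hG a).intervalIntegrable
  have mul_mem {s : ℝ} (hs : |s| ≤ h) : -(R * h) ≤ R * s ∧ R * s ≤ R * h := by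
    rw [← abs_le, abs_mul, abs_of_nonneg hR]
    gcongr
  have upper : F x - G x - L * (2 * (R * h)) ≤ 4 * ε / (2 * k + 1) + D / 2 := by
    refine le_add_half_of_integral_dirichletPolynomial_sq_mul_le hk (hint (x + R * h))
      (fun s hs => ?_) (fun s => hD _) hε₀
      ((le_abs_self _).trans (hε _ (by simp [abs_of_nonneg h_nonneg])))
    obtain ⟨hs₁, hs₂⟩ := mul_mem hs
    have le_right : x ≤ x + R * h + R * s := by linarith
    have : L * (x + R * h + R * s - x) ≤ L * (2 * (R * h)) := by gcongr; linarith
    linarith [hF le_right, hL le_right]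
  have lower : -(F x - G x) - L * (2 * (R * h)) ≤ 4 * ε / (2 * k + 1) + D / 2 := by
    refine le_add_half_of_integral_dirichletPolynomial_sq_mul_le hk
      (fun u v => (hint (x - R * h) u v).neg) (fun s hs => ?_)
      (fun s => (abs_neg _).trans_le (hD _)) hε₀ ?_
    · obtain ⟨hs₁, hs₂⟩ := mul_mem hs
      have left_le : x - R * h + R * s ≤ x := by linarith
      have : L * (x - (x - R * h + R * s)) ≤ L * (2 * (R * h)) := by gcongr; linarith
      simp only [Pi.neg_apply]
      linarith [hF left_le, hL left_le]
    · simp only [Pi.neg_apply, mul_neg, intervalIntegral.integral_neg]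
      exact (neg_le_abs _).trans (hε _ (by simp [abs_of_nonneg h_nonneg]))
  rw [const_eq, abs_le]
  constructor <;> linarith

end KernelSmoothing

section CumulativeDistribution

open ProbabilityTheory

variable {ν μ : Measure ℝ} [IsProbabilityMeasure ν] [IsProbabilityMeasure μ]

theorem discrepancy_le_two_mul {D : ℝ} (hD : ∀ x, |cdf ν x - cdf μ x| ≤ D) :
    discrepancy ν μ ≤ 2 * D := by
  have toReal_Icc (ρ : Measure ℝ) [IsProbabilityMeasure ρ] {a b : ℝ} (hab : a ≤ b) :
      (ρ (Set.Icc a b)).toReal = cdf ρ b - Function.leftLim (cdf ρ) a := by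
    conv_lhs => rw [← measure_cdf ρ, StieltjesFunction.measure_Icc]
    exact ENNReal.toReal_ofReal (sub_nonneg.2 ((monotone_cdf ρ).leftLim_le hab))
  have leftLim_le (a : ℝ) :
      |Function.leftLim (cdf ν) a - Function.leftLim (cdf μ) a| ≤ D :=
    le_of_tendsto (((monotone_cdf ν).tendsto_leftLim a).sub
      ((monotone_cdf μ).tendsto_leftLim a)).abs (Filter.Eventually.of_forall hD)
  refine Real.sSup_le ?_ (mul_nonneg zero_le_two ((abs_nonneg _).trans (hD 0)))
  rintro _ ⟨a, b, hab, rfl⟩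
  rw [toReal_Icc ν hab, toReal_Icc μ hab, sub_sub_sub_comm, two_mul]
  exact (abs_sub _ _).trans (add_le_add (hD b) (leftLim_le a))

theorem cdf_eq_zero_of_lt {u v x : ℝ} (hν : ν (Set.Icc u v)ᶜ = 0) (hx : x < u) :
    cdf ν x = 0 := by
  have subset : Set.Iic x ⊆ (Set.Icc u v)ᶜ := fun y hy hy' => (hy'.1.trans hy).not_gt hx
  rw [cdf_eq_real, measureReal_def, measure_mono_null subset hν, ENNReal.toReal_zero]

theorem cdf_eq_one_of_le {u v x : ℝ} (hν : ν (Set.Icc u v)ᶜ = 0) (hx : v ≤ x) :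
    cdf ν x = 1 := by
  have subset : (Set.Iic x)ᶜ ⊆ (Set.Icc u v)ᶜ := fun y hy hy' => hy (hy'.2.trans hx)
  rw [cdf_eq_real, measureReal_def, (prob_compl_eq_zero_iff measurableSet_Iic).1
    (measure_mono_null subset hν), ENNReal.toReal_one]

theorem integrable_of_measure_compl_Icc_eq_zero {ρ : Measure ℝ} [IsFiniteMeasure ρ] {u v : ℝ}
    {f : ℝ → ℝ} (hf : Continuous f) (hρ : ρ (Set.Icc u v)ᶜ = 0) : Integrable f ρ := by
  rw [← Measure.restrict_eq_self_of_ae_mem (mem_ae_iff.2 hρ)]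
  exact hf.continuousOn.integrableOn_compact isCompact_Icc

theorem integral_mul_cdf_comp_affine {f : ℝ → ℝ} {a R : ℝ} (hf : Continuous f) (hR : 0 < R)
    (hν : ν (Set.Icc (a - R) (a + R))ᶜ = 0) :
    ∫ s in (-1)..1, f s * cdf ν (a + R * s) = ∫ y, (∫ s in ((y - a) / R)..1, f s) ∂ν := by
  have integrable : Integrable (Function.uncurry fun s y => {z | z ≤ a + R * s}.indicator
      (fun _ => f s) y) ((volume.restrict (Set.uIoc (-1) 1)).prod ν) := by
    have hf' : Integrable f (volume.restrict (Set.uIoc (-1) 1)) :=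
      (intervalIntegrable_iff.1 (hf.intervalIntegrable _ _))
    exact (hf'.comp_fst ν).indicator (measurableSet_le measurable_snd (by fun_prop))
  calc ∫ s in (-1)..1, f s * cdf ν (a + R * s)
      = ∫ s in (-1)..1, ∫ y, {z | z ≤ a + R * s}.indicator (fun _ => f s) y ∂ν :=
        intervalIntegral.integral_congr fun s _ => by
          change _ = ∫ y, (Set.Iic (a + R * s)).indicator (fun _ => f s) y ∂ν
          rw [integral_indicator_const _ measurableSet_Iic, cdf_eq_real, smul_eq_mul, mul_comm]
    _ = ∫ y, (∫ s in (-1)..1, {z | z ≤ a + R * s}.indicator (fun _ => f s) y) ∂ν :=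
        intervalIntegral_integral_swap integrable
    _ = ∫ y, (∫ s in ((y - a) / R)..1, f s) ∂ν := integral_congr_ae ?_
  filter_upwards [mem_ae_iff.2 hν] with y ⟨hy₁, hy₂⟩
  have lower : -1 ≤ (y - a) / R := by rw [le_div_iff₀ hR]; linarith
  have upper : (y - a) / R ≤ 1 := by rw [div_le_iff₀ hR]; linarith
  have indicator_eq (s : ℝ) : {z | z ≤ a + R * s}.indicator (fun _ => f s) y =
      (Set.Ici ((y - a) / R)).indicator f s := by
    simp only [Set.indicator, Set.mem_ofPred_eq, Set.mem_Ici, div_le_iff₀ hR, sub_le_iff_le_add,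
      add_comm, mul_comm]
  simp only [indicator_eq]
  rw [intervalIntegral.integral_of_le (by norm_num), intervalIntegral.integral_of_le upper,
    setIntegral_indicator measurableSet_Ici,
    setIntegral_congr_set ((ae_eq_refl _).inter Ioi_ae_eq_Ici.symm), Set.Ioc_inter_Ioi,
    sup_eq_right.2 lower]

theorem integral_pow_mul_cdf_comp_affine {a R : ℝ} (hR : 0 < R)
    (hν : ν (Set.Icc (a - R) (a + R))ᶜ = 0) (j : ℕ) :
    ∫ s in (-1)..1, s ^ j * cdf ν (a + R * s) =
      (1 - (∫ y, (y - a) ^ (j + 1) ∂ν) / R ^ (j + 1)) / (j + 1) := by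
  rw [integral_mul_cdf_comp_affine (by fun_prop) hR hν]
  have : Integrable (fun y => (y - a) ^ (j + 1) / R ^ (j + 1)) ν :=
    integrable_of_measure_compl_Icc_eq_zero (by fun_prop) hν
  simp only [integral_pow, one_pow, div_pow]
  rw [integral_div, integral_sub (integrable_const 1) this, integral_div, integral_const,
    probReal_univ, one_smul]

end CumulativeDistribution

section MomentComparison

open Polynomial ProbabilityTheory

/-- Integration of polynomials against the weight `g` with respect to `μ`, as a linear
functional. -/
noncomputable def polynomialIntegral (μ : Measure ℝ) (g : ℝ → ℝ)
    (h : ∀ P : ℝ[X], Integrable (fun x => P.eval x * g x) μ) : ℝ[X] →ₗ[ℝ] ℝ where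
  toFun P := ∫ x, P.eval x * g x ∂μ
  map_add' P Q := by simp only [eval_add, add_mul, integral_add (h P) (h Q)]
  map_smul' r P := by
    simp only [eval_smul, smul_eq_mul, mul_assoc, integral_const_mul, RingHom.id_apply]

theorem exists_X_mul_geronimus_eq {q : ℝ} (hq : 0 ≤ q) (m : ℕ) :
    ∃ c, 0 ≤ c ∧ c ≤ q + 1 ∧
      X * geronimus q m = geronimus q (m + 1) + C c * geronimus q (m - 1) :=
  match m with
  | 0 => ⟨0, le_rfl, by linarith, by simp [geronimus]⟩
  | 1 => ⟨q + 1, by linarith, le_rfl, by simp only [geronimus, Nat.sub_self]; ring⟩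
  | m + 2 => ⟨q, hq, by linarith, by simp only [geronimus, Nat.add_one_sub_one]; ring⟩

theorem abs_map_X_sub_C_pow_mul_geronimus_le {Λ : ℝ[X] →ₗ[ℝ] ℝ} {q a δ : ℝ} {M : ℕ}
    (hq : 0 ≤ q) (hδ : 0 ≤ δ) (hΛ₁ : Λ 1 = 0) (hΛ : ∀ m < M, |Λ (geronimus q (m + 1))| ≤ δ)
    (j m : ℕ) (hjm : j + m ≤ M) :
    |Λ ((X - C a) ^ j * geronimus q m)| ≤ (q + 2 + |a|) ^ j * δ := by
  induction j generalizing m with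
  | zero =>
    cases m with
    | zero => simpa [geronimus, hΛ₁] using hδ
    | succ m => simpa using hΛ m (by omega)
  | succ j ih =>
    obtain ⟨c, hc₀, hc, hX⟩ := exists_X_mul_geronimus_eq hq m
    have expand : (X - C a) ^ (j + 1) * geronimus q m =
        (X - C a) ^ j * geronimus q (m + 1) + c • ((X - C a) ^ j * geronimus q (m - 1)) -
          a • ((X - C a) ^ j * geronimus q m) := by
      rw [pow_succ, mul_assoc, sub_mul, hX, smul_eq_C_mul, smul_eq_C_mul]
      ring
    rw [expand, map_sub, map_add, map_smul, map_smul, smul_eq_mul, smul_eq_mul]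
    set B := (q + 2 + |a|) ^ j * δ
    calc _ ≤ |Λ ((X - C a) ^ j * geronimus q (m + 1))| +
            |c * Λ ((X - C a) ^ j * geronimus q (m - 1))| +
            |a * Λ ((X - C a) ^ j * geronimus q m)| :=
          (abs_sub _ _).trans (by gcongr; exact abs_add_le _ _)
      _ ≤ B + (q + 1) * B + |a| * B := by
          rw [abs_mul, abs_mul, abs_of_nonneg hc₀]
          gcongr
          · exact ih _ (by omega)
          · exact ih _ (by omega)
          · exact ih _ (by omega)
      _ = (q + 2 + |a|) ^ (j + 1) * δ := by rw [pow_succ]; ring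

variable {ν μ : Measure ℝ} [IsProbabilityMeasure ν] [IsProbabilityMeasure μ] {q δ : ℝ}

theorem abs_integral_sub_pow_sub_le {a : ℝ} {M j : ℕ} (hq : 0 ≤ q) (hδ : 0 ≤ δ)
    (hν : ν (Set.Icc (-(q + 1)) (q + 1))ᶜ = 0) (hμ : μ (Set.Icc (-(q + 1)) (q + 1))ᶜ = 0)
    (h : ∀ m < M, |(∫ x, (geronimus q (m + 1)).eval x ∂ν) -
      ∫ x, (geronimus q (m + 1)).eval x ∂μ| ≤ δ) (hj : j ≤ M) :
    |(∫ x, (x - a) ^ j ∂ν) - ∫ x, (x - a) ^ j ∂μ| ≤ (q + 2 + |a|) ^ j * δ := by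
  let Λ : ℝ[X] →ₗ[ℝ] ℝ :=
    polynomialIntegral ν (fun _ => 1)
      (fun P => integrable_of_measure_compl_Icc_eq_zero (by fun_prop) hν) -
    polynomialIntegral μ (fun _ => 1)
      (fun P => integrable_of_measure_compl_Icc_eq_zero (by fun_prop) hμ)
  have Λ_apply (P : ℝ[X]) : Λ P = (∫ x, P.eval x ∂ν) - ∫ x, P.eval x ∂μ := by
    simp [Λ, polynomialIntegral]
  have := abs_map_X_sub_C_pow_mul_geronimus_le (Λ := Λ) (a := a) hq hδ (by simp [Λ_apply])
    (fun m hm => (Λ_apply _).symm ▸ h m hm) j 0 hj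
  simpa [Λ_apply, geronimus] using this

theorem abs_integral_pow_mul_cdf_sub_cdf_le {a : ℝ} {M j : ℕ} (hq : 0 ≤ q)
    (hν : ν (Set.Icc (-(q + 1)) (q + 1))ᶜ = 0) (hμ : μ (Set.Icc (-(q + 1)) (q + 1))ᶜ = 0)
    (h : ∀ m < M, |(∫ x, (geronimus q (m + 1)).eval x ∂ν) -
      ∫ x, (geronimus q (m + 1)).eval x ∂μ| ≤ δ) (ha : |a| ≤ q + 2) (hj : j < M) :
    |∫ s in (-1)..1, s ^ j * (cdf ν (a + 2 * (q + 2) * s) - cdf μ (a + 2 * (q + 2) * s))| ≤ δ := by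
  have hδ : 0 ≤ δ := (abs_nonneg _).trans (h j hj)
  set R := 2 * (q + 2)
  have R_pos : 0 < R := by positivity
  have supp {ρ : Measure ℝ} (hρ : ρ (Set.Icc (-(q + 1)) (q + 1))ᶜ = 0) :
      ρ (Set.Icc (a - R) (a + R))ᶜ = 0 := by
    obtain ⟨ha₁, ha₂⟩ := abs_le.1 ha
    exact measure_mono_null (Set.compl_subset_compl.2
      (Set.Icc_subset_Icc (by linarith) (by linarith))) hρ
  have integrable (ρ : Measure ℝ) :
      IntervalIntegrable (fun s => s ^ j * cdf ρ (a + R * s)) volume (-1) 1 := by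
    have mono : Monotone fun s => cdf ρ (a + R * s) :=
      fun s t hst => monotone_cdf ρ (by gcongr)
    exact mono.intervalIntegrable.continuousOn_mul (by fun_prop)
  have moment := abs_integral_sub_pow_sub_le (a := a) hq hδ hν hμ h (Nat.succ_le_of_lt hj)
  have pow_le : (q + 2 + |a|) ^ (j + 1) ≤ R ^ (j + 1) := by
    gcongr
    linarith
  simp only [mul_sub]
  rw [intervalIntegral.integral_sub (integrable ν) (integrable μ),
    integral_pow_mul_cdf_comp_affine R_pos (supp hν),
    integral_pow_mul_cdf_comp_affine R_pos (supp hμ), ← sub_div, sub_sub_sub_cancel_left,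
    ← sub_div, abs_div, abs_div, abs_sub_comm, abs_of_pos (by positivity : 0 < R ^ (j + 1)),
    abs_of_pos (by positivity : (0 : ℝ) < j + 1)]
  refine (div_le_self (by positivity) (by norm_num)).trans ((div_le_iff₀' (by positivity)).2 ?_)
  exact moment.trans (by gcongr)

theorem abs_integral_dirichletPolynomial_sq_mul_cdf_sub_cdf_le {a : ℝ} {k : ℕ} (hq : 0 ≤ q)
    (hν : ν (Set.Icc (-(q + 1)) (q + 1))ᶜ = 0) (hμ : μ (Set.Icc (-(q + 1)) (q + 1))ᶜ = 0)
    (h : ∀ m < 4 * k + 1, |(∫ x, (geronimus q (m + 1)).eval x ∂ν) -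
      ∫ x, (geronimus q (m + 1)).eval x ∂μ| ≤ δ) (ha : |a| ≤ q + 2) :
    |∫ s in (-1)..1, (dirichletPolynomial k).eval s ^ 2 *
      (cdf ν (a + 2 * (q + 2) * s) - cdf μ (a + 2 * (q + 2) * s))| ≤ 49 ^ k * δ := by
  have integrable (P : ℝ[X]) : Integrable (fun s => P.eval s *
      (cdf ν (a + 2 * (q + 2) * s) - cdf μ (a + 2 * (q + 2) * s)))
      (volume.restrict (Set.Ioc (-1) 1)) := by
    have (ρ : Measure ℝ) : IntervalIntegrable (fun s => cdf ρ (a + 2 * (q + 2) * s))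
        volume (-1) 1 :=
      (show Monotone fun s => cdf ρ (a + 2 * (q + 2) * s) from
        fun s t hst => monotone_cdf ρ (by gcongr)).intervalIntegrable
    exact (((this ν).sub (this μ)).continuousOn_mul P.continuous.continuousOn).1
  have apply_eq (P : ℝ[X]) : polynomialIntegral _ _ integrable P = ∫ s in (-1)..1, P.eval s *
      (cdf ν (a + 2 * (q + 2) * s) - cdf μ (a + 2 * (q + 2) * s)) :=
    (intervalIntegral.integral_of_le (by norm_num)).symm
  simpa only [apply_eq, eval_pow] using abs_map_dirichletPolynomial_sq_le
    (Λ := polynomialIntegral _ _ integrable) (δ := δ) (k := k) fun j hj => by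
      simpa only [apply_eq, eval_pow, eval_X] using
        abs_integral_pow_mul_cdf_sub_cdf_le hq hν hμ h ha (Nat.lt_succ_of_le hj)

theorem abs_cdf_sub_cdf_le_add_half {L D : ℝ} {k : ℕ} (hq : 0 ≤ q) (hL₀ : 0 ≤ L)
    (hL : ∀ ⦃x y⦄, x ≤ y → cdf μ y - cdf μ x ≤ L * (y - x))
    (hν : ν (Set.Icc (-(q + 1)) (q + 1))ᶜ = 0) (hμ : μ (Set.Icc (-(q + 1)) (q + 1))ᶜ = 0)
    (h : ∀ m < 4 * k + 1, |(∫ x, (geronimus q (m + 1)).eval x ∂ν) -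
      ∫ x, (geronimus q (m + 1)).eval x ∂μ| * 49 ^ k ≤ 1)
    (hk : 64 * (q + 2) ≤ 2 * k + 1) (hD : ∀ y, |cdf ν y - cdf μ y| ≤ D) (x : ℝ) :
    |cdf ν x - cdf μ x| ≤ (128 * (q + 2) * L + 4) / (2 * k + 1) + D / 2 := by
  have D_nonneg : 0 ≤ D := (abs_nonneg _).trans (hD x)
  rcases lt_or_ge x (-(q + 1)) with hx | hx
  · rw [cdf_eq_zero_of_lt hν hx, cdf_eq_zero_of_lt hμ hx, sub_self, abs_zero]
    positivity
  rcases le_or_gt (q + 1) x with hx' | hx'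
  · rw [cdf_eq_one_of_le hν hx', cdf_eq_one_of_le hμ hx', sub_self, abs_zero]
    positivity
  have radius_le : 2 * (q + 2) * (32 / (2 * k + 1)) ≤ 1 := by
    rw [mul_div_assoc', div_le_one (by positivity)]
    linarith
  have hk' : 32 ≤ 2 * k + 1 := by
    have : (32 : ℝ) ≤ 2 * k + 1 := by linarith
    exact_mod_cast this
  refine (abs_sub_le_add_half_of_integral_dirichletPolynomial_sq_mul_le
    (R := 2 * (q + 2)) (ε := 1) (monotone_cdf ν) (monotone_cdf μ) hL hL₀ (by positivity) hk' hD
    fun a ha => ?_).trans_eq (by ring)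
  have a_le : |a| ≤ q + 2 := by
    obtain ⟨ha₁, ha₂⟩ := abs_le.1 (ha.trans radius_le)
    exact abs_le.2 ⟨by linarith, by linarith⟩
  have := abs_integral_dirichletPolynomial_sq_mul_cdf_sub_cdf_le (k := k) (δ := 1 / 49 ^ k) hq
    hν hμ (fun m hm => (le_div_iff₀ (by positivity)).2 (h m hm)) a_le
  rwa [mul_one_div_cancel (by positivity)] at this

theorem abs_cdf_sub_cdf_le {L : ℝ} {k : ℕ} (hq : 0 ≤ q) (hL₀ : 0 ≤ L)
    (hL : ∀ ⦃x y⦄, x ≤ y → cdf μ y - cdf μ x ≤ L * (y - x))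
    (hν : ν (Set.Icc (-(q + 1)) (q + 1))ᶜ = 0) (hμ : μ (Set.Icc (-(q + 1)) (q + 1))ᶜ = 0)
    (h : ∀ m < 4 * k + 1, |(∫ x, (geronimus q (m + 1)).eval x ∂ν) -
      ∫ x, (geronimus q (m + 1)).eval x ∂μ| * 49 ^ k ≤ 1) (x : ℝ) :
    |cdf ν x - cdf μ x| ≤ ((q + 2) * (256 * L + 64) + 8) / (2 * k + 1) := by
  have le_one (y : ℝ) : |cdf ν y - cdf μ y| ≤ 1 :=
    abs_sub_le_of_nonneg_of_le (cdf_nonneg ν y) (cdf_le_one ν y) (cdf_nonneg μ y) (cdf_le_one μ y)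
  have le_sup (y : ℝ) : |cdf ν y - cdf μ y| ≤ ⨆ z, |cdf ν z - cdf μ z| :=
    le_ciSup ⟨1, Set.forall_mem_range.2 le_one⟩ y
  rcases lt_or_ge (2 * k + 1 : ℝ) (64 * (q + 2)) with hk | hk
  · have : 0 ≤ (q + 2) * (256 * L) := by positivity
    exact (le_one x).trans ((one_le_div (by positivity)).2 (by linarith))
  · have sup_le := ciSup_le (abs_cdf_sub_cdf_le_add_half hq hL₀ hL hν hμ h hk le_sup)
    have : ((q + 2) * (256 * L + 64) + 8) / (2 * k + 1) =
        2 * ((128 * (q + 2) * L + 4) / (2 * k + 1)) + 64 * (q + 2) / (2 * k + 1) := by ring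
    have : 0 ≤ 64 * (q + 2) / (2 * k + 1) := by positivity
    linarith [le_sup x]

end MomentComparison

section Discrepancy

open Polynomial ProbabilityTheory

variable {d : ℕ}

theorem cdf_kestenMcKay_sub_le (hd : 2 ≤ d) ⦃x y : ℝ⦄ (hxy : x ≤ y) :
    cdf (kestenMcKay d) y - cdf (kestenMcKay d) x ≤ d ^ 2 * (y - x) := by
  have := isProbabilityMeasure_kestenMcKay hd
  refine le_trans ?_ (real_kestenMcKay_Icc_le hd hxy)
  rw [cdf_eq_real, cdf_eq_real, sub_le_iff_le_add', ← Set.Iic_union_Icc_eq_Iic hxy]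
  exact measureReal_union_le _ _

theorem exists_discrepancy_kestenMcKay_le_div (hd : 2 ≤ d) :
    ∃ C > 0, ∀ (ν : Measure ℝ) [IsProbabilityMeasure ν],
      ν (Set.Icc (-(2 * d : ℝ)) (2 * d))ᶜ = 0 → ∀ k : ℕ, 1 ≤ k →
        (∀ m < 4 * k + 1, |∫ x, (geronimus (2 * d - 1 : ℝ) (m + 1)).eval x ∂ν| * 49 ^ k ≤ 1) →
          discrepancy ν (kestenMcKay d) ≤ C / k := by
  have := isProbabilityMeasure_kestenMcKay hd
  have hd' : (2 : ℝ) ≤ d := by exact_mod_cast hd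
  refine ⟨(2 * d + 1) * (256 * d ^ 2 + 64) + 8, by positivity, fun ν _ hν k hk h => ?_⟩
  have q_add_one : (2 * d - 1 + 1 : ℝ) = 2 * d := by ring
  have key := discrepancy_le_two_mul <| abs_cdf_sub_cdf_le (q := 2 * d - 1) (k := k)
    (by linarith) (sq_nonneg _) (cdf_kestenMcKay_sub_le hd) (by rwa [q_add_one])
    (by rw [q_add_one]; exact kestenMcKay_compl_Icc d)
    (by simpa only [integral_geronimus_kestenMcKay hd, sub_zero] using h)
  have hk' : (0 : ℝ) < k := by exact_mod_cast hk
  refine key.trans ?_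
  rw [mul_div_assoc', div_le_div_iff₀ (by positivity) hk',
    show (2 * d - 1 + 2 : ℝ) = 2 * d + 1 by ring, mul_comm 2, mul_assoc]
  gcongr
  linarith

end Discrepancy

section Proportion

open Polynomial

theorem one_sub_le_card_subtype_div_card {α : Type*} [Fintype α] [Nonempty α] {M : ℕ}
    {F : ℕ → α → ℝ} {E W : ℝ} {P : α → Prop} (hF : ∀ m a, 0 ≤ F m a) (hE : 0 ≤ E)
    (hW : ∀ m < M, ∑ a, F m a ≤ W * Fintype.card α)
    (hP : ∀ a, (∀ m < M, F m a * E ≤ 1) → P a) :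
    1 - M * (W * E) ≤ (Nat.card {a // P a} : ℝ) / Nat.card α := by
  classical
  have one_le (a : α) : 1 ≤ (if P a then 1 else 0) + ∑ m ∈ Finset.range M, F m a * E := by
    have nonneg : ∀ m ∈ Finset.range M, 0 ≤ F m a * E := fun m _ => mul_nonneg (hF m a) hE
    by_cases ha : P a
    · rw [if_pos ha]
      exact le_add_of_nonneg_right (Finset.sum_nonneg nonneg)
    · obtain ⟨m, hm, one_lt⟩ : ∃ m < M, 1 < F m a * E := by
        by_contra! h
        exact ha (hP a h)
      rw [if_neg ha, zero_add]
      exact one_lt.le.trans (Finset.single_le_sum nonneg (Finset.mem_range.2 hm))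
  have sum_le : ∑ a, ∑ m ∈ Finset.range M, F m a * E ≤ M * (W * Fintype.card α * E) := by
    rw [Finset.sum_comm]
    simp only [← Finset.sum_mul]
    calc (∑ m ∈ Finset.range M, ∑ a, F m a) * E
        ≤ (∑ _m ∈ Finset.range M, W * Fintype.card α) * E := by
          gcongr with m hm
          exact hW m (Finset.mem_range.1 hm)
      _ = M * (W * Fintype.card α * E) := by
          rw [Finset.sum_const, Finset.card_range, nsmul_eq_mul, mul_assoc]
  have card_le := Finset.sum_le_sum fun a (_ : a ∈ Finset.univ) => one_le a
  simp only [Finset.sum_add_distrib, Finset.sum_const, Finset.card_univ, Finset.sum_boole,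
    nsmul_eq_mul, mul_one] at card_le
  rw [Nat.card_eq_fintype_card, Nat.card_eq_fintype_card, Fintype.card_subtype,
    le_div_iff₀ (by exact_mod_cast Fintype.card_pos)]
  linarith

theorem IsIrreducibleRep.sum_abs_integral_geronimus_specMeasure_le {p n d m M : ℕ}
    [Fact p.Prime] [NeZero n] {π : SL 2 p →* Matrix.unitaryGroup (Fin n) ℂ} (hp : 3 ≤ p)
    (hπ : IsIrreducibleRep π) (hπ' : ∃ g, π g ≠ 1) (hd : 1 ≤ d) (hm : m < M) :
    ∑ S : Fin d → SL 2 p,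
      |∫ x, (geronimus (2 * d - 1 : ℝ) (m + 1)).eval x ∂specMeasure (Amat π S)| ≤
      (2 * d) ^ M * (8 * M) / √p * Fintype.card (Fin d → SL 2 p) := by
  have hm' : (m + 1 : ℝ) ≤ M := by exact_mod_cast hm
  have hd' : (1 : ℝ) ≤ 2 * d := by exact_mod_cast (by omega : 1 ≤ 2 * d)
  have hp₀ : (0 : ℝ) < p := by exact_mod_cast (by omega : 0 < p)
  rw [div_mul_eq_mul_div, le_div_iff₀ (Real.sqrt_pos.2 hp₀)]
  refine (hπ.sum_abs_integral_geronimus_specMeasure_mul_sqrt_le hp hπ' d m).trans ?_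
  rw [← mul_assoc]
  gcongr
  exact Nat.succ_le_of_lt hm

theorem exists_one_sub_le_card_discrepancy_le_div_card {d : ℕ} (hd : 2 ≤ d) :
    ∃ C > 0, ∀ {p n : ℕ} [Fact p.Prime] {π : SL 2 p →* Matrix.unitaryGroup (Fin n) ℂ}, 3 ≤ p →
      IsIrreducibleRep π → (∃ g, π g ≠ 1) → ∀ {k : ℕ}, 1 ≤ k →
        1 - 16 * d * ((1225 * (2 * d) ^ 4) ^ k / √p) ≤
          (Nat.card {S : Fin d → SL 2 p //
              discrepancy (specMeasure (Amat π S)) (kestenMcKay d) ≤ C / k} : ℝ) /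
            (Nat.card (Fin d → SL 2 p) : ℝ) := by
  obtain ⟨C, hC, discrepancy_le⟩ := exists_discrepancy_kestenMcKay_le_div hd
  refine ⟨C, hC, fun {p n} _ π hp hπ hπ' k hk => ?_⟩
  have : NeZero n := ⟨by rintro rfl; exact hπ'.elim fun g hg => hg (Subsingleton.elim _ _)⟩
  refine le_trans ?_ <| one_sub_le_card_subtype_div_card (M := 4 * k + 1) (E := 49 ^ k)
    (fun m S => abs_nonneg _) (by positivity)
    (fun m hm => hπ.sum_abs_integral_geronimus_specMeasure_le hp hπ' (by omega) hm) fun S hS =>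
      have := isProbabilityMeasure_specMeasure (isHermitian_Amat π S)
      discrepancy_le _ (specMeasure_Amat_compl_Icc π S) k hk hS
  have linear_le : (4 * k + 1 : ℝ) ≤ 5 ^ k := by
    have := one_add_mul_le_pow (by norm_num : (-2 : ℝ) ≤ 4) k
    norm_num at this
    linarith
  refine sub_le_sub_left ?_ 1
  calc ((4 * k + 1 : ℕ) * ((2 * d) ^ (4 * k + 1) * (8 * (4 * k + 1 : ℕ)) / √p * 49 ^ k) : ℝ)
      = 16 * d * ((4 * k + 1) * (4 * k + 1) * (49 * (2 * d) ^ 4) ^ k / √p) := by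
        rw [pow_succ, pow_mul, mul_pow 49]
        push_cast
        ring
    _ ≤ 16 * d * (5 ^ k * 5 ^ k * (49 * (2 * d) ^ 4) ^ k / √p) := by gcongr
    _ = 16 * d * ((1225 * (2 * d) ^ 4) ^ k / √p) := by
        rw [← mul_pow, ← mul_pow]
        ring

theorem exists_pow_div_sqrt_le_and_inv_le {Q x : ℝ} (hQ : 1 < Q) (hx : 1 < x)
    (hQx : Q ≤ x ^ (1 / 4 : ℝ)) :
    ∃ k : ℕ, 1 ≤ k ∧ Q ^ k / √x ≤ x ^ (-(1 / 4 : ℝ)) ∧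
      (k : ℝ)⁻¹ ≤ 8 * Real.log Q / Real.log x := by
  have hx₀ : 0 < x := by linarith
  obtain ⟨k, pow_le, lt_pow⟩ := exists_nat_pow_near (hQ.le.trans hQx) hQ
  have hk : 1 ≤ k := by
    by_contra! h
    obtain rfl : k = 0 := by omega
    rw [zero_add, pow_one] at lt_pow
    exact lt_pow.not_ge hQx
  refine ⟨k, hk, ?_, ?_⟩
  · rw [div_le_iff₀ (Real.sqrt_pos.2 hx₀), Real.sqrt_eq_rpow, ← Real.rpow_add hx₀]
    norm_num at pow_le ⊢
    exact pow_le
  · have log_lt := Real.log_lt_log (by positivity) lt_pow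
    rw [Real.log_rpow hx₀, Real.log_pow] at log_lt
    have log_Q_nonneg := (Real.log_pos hQ).le
    have : ((k + 1 : ℕ) : ℝ) * Real.log Q ≤ 2 * k * Real.log Q := by
      gcongr
      exact_mod_cast (by omega : k + 1 ≤ 2 * k)
    rw [inv_eq_one_div, div_le_div_iff₀ (by exact_mod_cast hk) (Real.log_pos hx)]
    linarith

theorem exists_one_sub_mul_rpow_le_card_discrepancy_le_div_log {d : ℕ} (hd : 2 ≤ d) :
    ∃ C > 0, ∀ {p n : ℕ} [Fact p.Prime] {π : SL 2 p →* Matrix.unitaryGroup (Fin n) ℂ},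
      1225 * (2 * d : ℝ) ^ 4 ≤ (p : ℝ) ^ (1 / 4 : ℝ) → IsIrreducibleRep π → (∃ g, π g ≠ 1) →
        1 - 16 * d * (p : ℝ) ^ (-(1 / 4 : ℝ)) ≤
          (Nat.card {S : Fin d → SL 2 p //
              discrepancy (specMeasure (Amat π S)) (kestenMcKay d) ≤ C / Real.log p} : ℝ) /
            (Nat.card (Fin d → SL 2 p) : ℝ) := by
  obtain ⟨C, hC, proportion_ge⟩ := exists_one_sub_le_card_discrepancy_le_div_card hd
  set Q : ℝ := 1225 * (2 * d) ^ 4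
  have hQ : 3 ≤ Q := by
    have : (1 : ℝ) ≤ (2 * d) ^ 4 := by exact_mod_cast Nat.one_le_pow _ _ (by omega)
    linarith
  have log_Q_pos : 0 < Real.log Q := Real.log_pos (by linarith)
  refine ⟨C * (8 * Real.log Q), by positivity, fun {p n} hp π hQp hπ hπ' => ?_⟩
  have hp₁ : (1 : ℝ) < p := by exact_mod_cast hp.out.one_lt
  have hp₃ : 3 ≤ p := by
    exact_mod_cast hQ.trans (hQp.trans (Real.rpow_le_self_of_one_le hp₁.le (by norm_num)))
  obtain ⟨k, hk, pow_le, inv_le⟩ := exists_pow_div_sqrt_le_and_inv_le (by linarith) hp₁ hQp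
  have div_le : C / k ≤ C * (8 * Real.log Q) / Real.log p := by
    rw [div_eq_mul_inv, mul_div_assoc]
    gcongr
  calc 1 - 16 * d * (p : ℝ) ^ (-(1 / 4 : ℝ)) ≤ 1 - 16 * d * (Q ^ k / √p) := by gcongr
    _ ≤ _ := proportion_ge hp₃ hπ hπ' hk
    _ ≤ _ := by
        gcongr
        exact Finite.card_le_of_embedding (Subtype.impEmbedding _ _ fun S hS => hS.trans div_le)

end Proportion

/-- Fix d ≥ 2. There exist C, c > 0 depending only on d such that for every prime p
and every nontrivial irreducible unitary representation π of SL₂(ℤ/pℤ), the proportion of tuples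
S ∈ SL₂(ℤ/pℤ)^d with D(μ_{π,S}, f_{2d}) ≤ C / log p is at least 1 − c·p^{−1/4}. -/
theorem stmt0 (d : ℕ) (hd : 2 ≤ d) :
    ∃ C c : ℝ, 0 < C ∧ 0 < c ∧
      ∀ (p : ℕ), p.Prime →
        ∀ (n : ℕ) (π : SL 2 p →* Matrix.unitaryGroup (Fin n) ℂ),
          IsIrreducibleRep π → (∃ g, π g ≠ 1) →
          (1 - c * (p : ℝ) ^ (-(1/4 : ℝ))) ≤
            (Nat.card {S : Fin d → SL 2 p //
                discrepancy (specMeasure (Amat π S)) (kestenMcKay d) ≤ C / Real.log p} : ℝ) /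
              (Nat.card (Fin d → SL 2 p) : ℝ) := by
  obtain ⟨C, hC, proportion_ge⟩ := exists_one_sub_mul_rpow_le_card_discrepancy_le_div_log hd
  set Q : ℝ := 1225 * (2 * d) ^ 4
  refine ⟨C, Q + 16 * d, hC, by positivity, fun p hp n π hπ hπ' => ?_⟩
  have : Fact p.Prime := ⟨hp⟩
  have hp₀ : (0 : ℝ) < p := by exact_mod_cast hp.pos
  rw [add_mul, ← sub_sub]
  rcases lt_or_ge ((p : ℝ) ^ (1 / 4 : ℝ)) Q with small | large
  · have : 1 ≤ Q * (p : ℝ) ^ (-(1 / 4 : ℝ)) := by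
      rw [Real.rpow_neg hp₀.le, ← div_eq_mul_inv, one_le_div (by positivity)]
      exact small.le
    exact (sub_nonpos.2 <| (sub_nonpos.2 this).trans (by positivity)).trans (by positivity)
  · refine le_trans ?_ (proportion_ge large hπ hπ')
    gcongr
    exact sub_le_self 1 (by positivity)
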